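/- arXiv:1706.06922 — 9 statements merged into one kernel-verified Lean document; each statement's English description precedes it below -/
import Mathlib

section
/- Fix an integer k ≥ 1, set d = 2k², and fix a real ε with 0 < ε < 1/2. Consider instances whose items are k-element subsets u of Fin d, with weight vector w_u(i) = 1 − ε if i ∈ u and w_u(i) = 0 otherwise. For every deterministic online algorithm with free disposal A (defined on lists of k-element subsets of Fin d, with feasibility taken with respect to these weight vectors), there exists an instance l, all of whose entries are k-element subsets of Fin d, such that OPT(l) ≥ 1 and OPT(l) ≥ k · |A(l)|. (Hence no deterministic algorithm has competitive ratio o(k), even for the utility function f(S) = |S|.) -/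
open scoped BigOperators

/-- The weight of the item at position `p` of the list `l` on dimension `i`
(zero if `p` is out of range). -/
def weightAt {Item : Type*} {d : ℕ} (w : Item → Fin d → ℝ) (l : List Item)
    (p : ℕ) (i : Fin d) : ℝ :=
  (l[p]?.map fun u => w u i).getD 0

/-- A finite set of positions `P` is feasible for the instance `l` if all positions are
valid indices and on every dimension the total weight is at most `1`. -/
def Feasible {Item : Type*} {d : ℕ} (w : Item → Fin d → ℝ) (l : List Item)
    (P : Finset ℕ) : Prop :=
  (∀ p ∈ P, p < l.length) ∧ ∀ i : Fin d, ∑ p ∈ P, weightAt w l p i ≤ 1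

/-- `OPT w l` is the maximum cardinality of a feasible set of positions for `l`. -/
noncomputable def OPT {Item : Type*} {d : ℕ} (w : Item → Fin d → ℝ) (l : List Item) : ℕ :=
  sSup {n | ∃ P : Finset ℕ, Feasible w l P ∧ P.card = n}

/-- A deterministic online algorithm with free disposal: it selects a set of positions,
when a new item arrives it may accept it and dispose of previously kept items (but never
recover discarded ones), and its selection is always feasible. -/
structure OnlineAlg {Item : Type*} {d : ℕ} (w : Item → Fin d → ℝ) where
  A : List Item → Finset ℕ
  online : ∀ (l : List Item) (u : Item), A (l ++ [u]) ⊆ A l ∪ {l.length}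
  feasible : ∀ l : List Item, Feasible w l (A l)

/-- Weight vectors of items that are `k`-element subsets of `Fin (2*k^2)`:
weight `1 - ε` on each dimension of the subset, `0` elsewhere. -/
noncomputable def W0 (k : ℕ) (ε : ℝ)
    (u : {u : Finset (Fin (2 * k ^ 2)) // u.card = k}) (i : Fin (2 * k ^ 2)) : ℝ :=
  if i ∈ u.val then 1 - ε else 0


/-- The type of items. -/
abbrev KItem (k : ℕ) := {u : Finset (Fin (2 * k ^ 2)) // u.card = k}

/-- The underlying set of the item at position `p` (empty when out of range). -/
def setAt {k : ℕ} (l : List (KItem k)) (p : ℕ) : Finset (Fin (2 * k ^ 2)) :=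
  (l[p]?.map fun u => u.val).getD ∅

lemma weightAt_eq {k : ℕ} (ε : ℝ) (l : List (KItem k)) (p : ℕ) (i : Fin (2 * k ^ 2)) :
    weightAt (W0 k ε) l p i = if i ∈ setAt l p then 1 - ε else 0 := by
  unfold weightAt setAt W0
  cases l[p]? <;> simp

lemma setAt_append_lt {k : ℕ} (l : List (KItem k)) (v : KItem k) (p : ℕ) (hp : p < l.length) :
    setAt (l ++ [v]) p = setAt l p := by
  unfold setAt
  rw [List.getElem?_append_left hp]

lemma setAt_append_eq {k : ℕ} (l : List (KItem k)) (v : KItem k) :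
    setAt (l ++ [v]) l.length = v.val := by
  simp [setAt]

lemma card_setAt_le {k : ℕ} (l : List (KItem k)) (p : ℕ) : (setAt l p).card ≤ k := by
  unfold setAt
  cases h : l[p]? with
  | none => simp
  | some u => simp [u.2]

lemma card_setAt {k : ℕ} (l : List (KItem k)) (p : ℕ) (hp : p < l.length) :
    (setAt l p).card = k := by
  simp [setAt, List.getElem?_eq_getElem hp, (l[p]).2]

lemma feasible_of_disj {k : ℕ} (ε : ℝ) (hε0 : 0 < ε) (l : List (KItem k))
    (P : Finset ℕ) (hP : ∀ p ∈ P, p < l.length)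
    (hd : ∀ p ∈ P, ∀ q ∈ P, p ≠ q → Disjoint (setAt l p) (setAt l q)) :
    Feasible (W0 k ε) l P := by
  refine ⟨hP, fun i => ?_⟩
  simp only [weightAt_eq]
  by_cases h : ∃ p ∈ P, i ∈ setAt l p
  · obtain ⟨p, hp, hi⟩ := h
    rw [Finset.sum_eq_single_of_mem p hp]
    · rw [if_pos hi]; linarith
    · intro q hq hqp
      rw [if_neg]
      intro hq'
      exact Finset.disjoint_left.1 (hd q hq p hp hqp) hq' hi
  · push Not at h
    rw [Finset.sum_eq_zero]
    · norm_num
    · intro p hp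
      rw [if_neg (h p hp)]

lemma not_both {k : ℕ} (ε : ℝ) (hε1 : ε < 1 / 2) (l : List (KItem k))
    (P : Finset ℕ) (hf : Feasible (W0 k ε) l P) (p q : ℕ) (hp : p ∈ P) (hq : q ∈ P)
    (hpq : p ≠ q) (e : Fin (2 * k ^ 2)) (hep : e ∈ setAt l p) (heq : e ∈ setAt l q) : False := by
  have h := hf.2 e
  have h2 : ∑ r ∈ ({p, q} : Finset ℕ), weightAt (W0 k ε) l r e ≤
      ∑ r ∈ P, weightAt (W0 k ε) l r e := by
    apply Finset.sum_le_sum_of_subset_of_nonneg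
    · intro r hr
      simp only [Finset.mem_insert, Finset.mem_singleton] at hr
      rcases hr with rfl | rfl <;> assumption
    · intro r _ _
      rw [weightAt_eq]
      split_ifs <;> linarith
  rw [Finset.sum_pair hpq, weightAt_eq, weightAt_eq, if_pos hep, if_pos heq] at h2
  linarith

lemma le_OPT {k : ℕ} (ε : ℝ) (l : List (KItem k))
    (P : Finset ℕ) (hf : Feasible (W0 k ε) l P) : P.card ≤ OPT (W0 k ε) l := by
  apply le_csSup
  · refine ⟨l.length, ?_⟩
    rintro n ⟨Q, hQ, rfl⟩
    have : Q ⊆ Finset.range l.length := fun q hq => Finset.mem_range.2 (hQ.1 q hq)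
    simpa using Finset.card_le_card this
  · exact ⟨P, hf, rfl⟩

/-- The adversary's invariant: the items form a tree-like intersection pattern, properly
2-coloured by `P` and `Q`, and the algorithm holds at most the item `h ∈ P`. -/
structure AdvInv {k : ℕ} {ε : ℝ} (alg : OnlineAlg (W0 k ε)) (l : List (KItem k)) (h : ℕ)
    (P Q : Finset ℕ) : Prop where
  held : alg.A l ⊆ {h}
  hP : h ∈ P
  ltP : ∀ p ∈ P, p < l.length
  ltQ : ∀ p ∈ Q, p < l.length
  card : l.length ≤ P.card + Q.card
  disjP : ∀ p ∈ P, ∀ q ∈ P, p ≠ q → Disjoint (setAt l p) (setAt l q)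
  disjQ : ∀ p ∈ Q, ∀ q ∈ Q, p ≠ q → Disjoint (setAt l p) (setAt l q)
  cover : ∀ p < l.length, p ∈ P ∨ p ∈ Q
  inter : ∀ q ∈ Q, (setAt l h ∩ setAt l q).card ≤ 1

lemma disj_insert {k : ℕ} (l : List (KItem k)) (v : KItem k) (Q : Finset ℕ)
    (ltQ : ∀ p ∈ Q, p < l.length)
    (disjQ : ∀ p ∈ Q, ∀ q ∈ Q, p ≠ q → Disjoint (setAt l p) (setAt l q))
    (hv : ∀ q ∈ Q, Disjoint v.val (setAt l q)) :
    ∀ p ∈ insert l.length Q, ∀ q ∈ insert l.length Q, p ≠ q →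
      Disjoint (setAt (l ++ [v]) p) (setAt (l ++ [v]) q) := by
  intro p hp q hq hpq
  rw [Finset.mem_insert] at hp hq
  rcases hp with rfl | hp <;> rcases hq with rfl | hq
  · exact absurd rfl hpq
  · rw [setAt_append_eq, setAt_append_lt _ _ _ (ltQ q hq)]
    exact hv q hq
  · rw [setAt_append_eq, setAt_append_lt _ _ _ (ltQ p hp)]
    exact (hv p hp).symm
  · rw [setAt_append_lt _ _ _ (ltQ p hp), setAt_append_lt _ _ _ (ltQ q hq)]
    exact disjQ p hp q hq hpq

lemma step {k : ℕ} (hk : 1 ≤ k) {ε : ℝ} (hε1 : ε < 1 / 2)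
    (alg : OnlineAlg (W0 k ε)) (l : List (KItem k)) (h : ℕ) (P Q : Finset ℕ)
    (I : AdvInv alg l h P Q) (hQ : Q.card < k) (hn : l.length ≤ 2 * k - 2) :
    ∃ (l' : List (KItem k)) (h' : ℕ) (P' Q' : Finset ℕ),
      l'.length = l.length + 1 ∧ AdvInv alg l' h' P' Q' := by
  have hlt := I.ltP h I.hP
  -- the element of the held item not used by any other item
  obtain ⟨e, he, heQ⟩ : ∃ e ∈ setAt l h, e ∉ Q.biUnion (fun q => setAt l h ∩ setAt l q) := by
    apply Finset.exists_mem_notMem_of_card_lt_card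
    rw [card_setAt l h hlt]
    calc _ ≤ ∑ q ∈ Q, (setAt l h ∩ setAt l q).card := Finset.card_biUnion_le
      _ ≤ ∑ q ∈ Q, 1 := Finset.sum_le_sum I.inter
      _ < k := by simpa using hQ
  have heQ' : ∀ q ∈ Q, e ∉ setAt l q := by
    intro q hq hmem
    exact heQ (Finset.mem_biUnion.2 ⟨q, hq, Finset.mem_inter.2 ⟨he, hmem⟩⟩)
  -- fresh elements
  obtain ⟨F, hF, hFc⟩ : ∃ F ⊆ ((Finset.range l.length).biUnion (setAt l))ᶜ, F.card = k - 1 := by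
    apply Finset.exists_subset_card_eq
    rw [Finset.card_compl, Fintype.card_fin]
    have h1 : ((Finset.range l.length).biUnion (setAt l)).card ≤ l.length * k := by
      simpa using Finset.card_biUnion_le_card_mul (Finset.range l.length) (setAt l) k
        (fun p _ => card_setAt_le l p)
    obtain ⟨m, rfl⟩ : ∃ m, k = m + 1 := ⟨k - 1, by omega⟩
    have h2 : l.length * (m + 1) ≤ (2 * m) * (m + 1) := Nat.mul_le_mul_right _ (by omega)
    have h3 : 2 * (m + 1) ^ 2 = (2 * m) * (m + 1) + 2 * (m + 1) := by ring
    omega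
  have hF' : ∀ x ∈ F, ∀ p < l.length, x ∉ setAt l p := by
    intro x hx p hp hmem
    exact (Finset.mem_compl.1 (hF hx)) (Finset.mem_biUnion.2 ⟨p, Finset.mem_range.2 hp, hmem⟩)
  have heF : e ∉ F := fun hx => hF' e hx h hlt he
  let v : KItem k := ⟨insert e F, by rw [Finset.card_insert_of_notMem heF, hFc]; omega⟩
  have hvint : ∀ p < l.length, v.val ∩ setAt l p ⊆ {e} := by
    intro p hp x hx
    rw [Finset.mem_inter] at hx
    rcases Finset.mem_insert.1 hx.1 with hxe | hxF
    · simpa using hxe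
    · exact absurd hx.2 (hF' x hxF p hp)
  have hvQ : ∀ q ∈ Q, Disjoint v.val (setAt l q) := by
    intro q hq
    rw [Finset.disjoint_left]
    intro x hx hxq
    have := hvint q (I.ltQ q hq) (Finset.mem_inter.2 ⟨hx, hxq⟩)
    rw [Finset.mem_singleton] at this
    exact heQ' q hq (this ▸ hxq)
  have hcardint : ∀ p < l.length, (v.val ∩ setAt l p).card ≤ 1 := fun p hp => by
    simpa using Finset.card_le_card (hvint p hp)
  have hsub : ∀ x ∈ alg.A (l ++ [v]), x = h ∨ x = l.length := by
    intro x hx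
    have := alg.online l v hx
    rw [Finset.mem_union, Finset.mem_singleton] at this
    rcases this with h1 | h1
    · exact Or.inl (by simpa using I.held h1)
    · exact Or.inr h1
  have hnQ : l.length ∉ Q := fun hx => (I.ltQ _ hx).false
  have hlen : (l ++ [v]).length = l.length + 1 := by simp
  have hltP' : ∀ p ∈ P, p < (l ++ [v]).length := fun p hp => by
    have := I.ltP p hp; omega
  have hltQ' : ∀ p ∈ insert l.length Q, p < (l ++ [v]).length := fun p hp => by
    rcases Finset.mem_insert.1 hp with rfl | hp
    · omega
    · have := I.ltQ p hp; omega
  have hdP : ∀ p ∈ P, ∀ q ∈ P, p ≠ q →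
      Disjoint (setAt (l ++ [v]) p) (setAt (l ++ [v]) q) := fun p hp q hq hpq => by
    rw [setAt_append_lt _ _ _ (I.ltP p hp), setAt_append_lt _ _ _ (I.ltP q hq)]
    exact I.disjP p hp q hq hpq
  have hdQ := disj_insert l v Q I.ltQ I.disjQ hvQ
  have hcov : ∀ p < (l ++ [v]).length, p ∈ P ∨ p ∈ insert l.length Q := fun p hp => by
    rcases Nat.lt_or_ge p l.length with h1 | h1
    · rcases I.cover p h1 with h2 | h2
      · exact Or.inl h2
      · exact Or.inr (Finset.mem_insert_of_mem h2)
    · exact Or.inr (Finset.mem_insert.2 (Or.inl (by omega)))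
  have hcard := I.card
  by_cases hmem : l.length ∈ alg.A (l ++ [v])
  · refine ⟨l ++ [v], l.length, insert l.length Q, P, hlen, ?_, Finset.mem_insert_self _ _,
      hltQ', hltP', ?_, hdQ, hdP, fun p hp => (hcov p hp).symm, ?_⟩
    · intro x hx
      rcases hsub x hx with rfl | rfl
      · exfalso
        refine not_both ε hε1 _ _ (alg.feasible (l ++ [v])) x l.length hx hmem hlt.ne e ?_ ?_
        · rwa [setAt_append_lt _ _ _ hlt]
        · rw [setAt_append_eq]; exact Finset.mem_insert_self _ _
      · simp
    · rw [Finset.card_insert_of_notMem hnQ]; omega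
    · intro q hq
      rw [setAt_append_eq, setAt_append_lt _ _ _ (I.ltP q hq)]
      exact hcardint q (I.ltP q hq)
  · refine ⟨l ++ [v], h, P, insert l.length Q, hlen, ?_, I.hP,
      hltP', hltQ', ?_, hdP, hdQ, hcov, ?_⟩
    · intro x hx
      rcases hsub x hx with rfl | rfl
      · simp
      · exact absurd hx hmem
    · rw [Finset.card_insert_of_notMem hnQ]; omega
    · intro q hq
      rw [setAt_append_lt _ _ _ hlt]
      rcases Finset.mem_insert.1 hq with rfl | hq
      · rw [setAt_append_eq, Finset.inter_comm]
        exact hcardint h hlt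
      · rw [setAt_append_lt _ _ _ (I.ltQ q hq)]
        exact I.inter q hq

lemma win {k : ℕ} (hk : 1 ≤ k) {ε : ℝ} (hε0 : 0 < ε)
    (alg : OnlineAlg (W0 k ε)) (l : List (KItem k)) (h : ℕ) (P Q : Finset ℕ)
    (I : AdvInv alg l h P Q) (hc : k ≤ P.card ∨ k ≤ Q.card) :
    1 ≤ OPT (W0 k ε) l ∧ k * (alg.A l).card ≤ OPT (W0 k ε) l := by
  have h1 : (alg.A l).card ≤ 1 := by simpa using Finset.card_le_card I.held
  have h2 : k ≤ OPT (W0 k ε) l := by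
    rcases hc with hc | hc
    · exact hc.trans (le_OPT ε l P (feasible_of_disj ε hε0 l P I.ltP I.disjP))
    · exact hc.trans (le_OPT ε l Q (feasible_of_disj ε hε0 l Q I.ltQ I.disjQ))
  have h3 : k * (alg.A l).card ≤ k * 1 := Nat.mul_le_mul_left _ h1
  exact ⟨hk.trans h2, by omega⟩

/-- Hardness for deterministic algorithms with slack: with `d = 2k²` dimensions,
items being `k`-subsets with all non-zero weights equal to `1 - ε`, every deterministic
online algorithm with free disposal has an instance on which `OPT ≥ 1` and
`OPT ≥ k · |A(l)|`. -/
theorem statement0 (k : ℕ) (hk : 1 ≤ k) (ε : ℝ) (hε0 : 0 < ε) (hε1 : ε < 1 / 2)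
    (alg : OnlineAlg (W0 k ε)) :
    ∃ l : List {u : Finset (Fin (2 * k ^ 2)) // u.card = k},
      1 ≤ OPT (W0 k ε) l ∧ k * (alg.A l).card ≤ OPT (W0 k ε) l := by
  have key : ∀ n, n + 1 ≤ 2 * k - 1 →
      (∃ l : List (KItem k), 1 ≤ OPT (W0 k ε) l ∧ k * (alg.A l).card ≤ OPT (W0 k ε) l) ∨
      ∃ (l : List (KItem k)) (h : ℕ) (P Q : Finset ℕ), l.length = n + 1 ∧ AdvInv alg l h P Q := by
    intro n
    induction n with
    | zero =>
      intro _
      right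
      obtain ⟨u, -, hu⟩ : ∃ u ⊆ (Finset.univ : Finset (Fin (2 * k ^ 2))), u.card = k := by
        apply Finset.exists_subset_card_eq
        rw [Finset.card_univ, Fintype.card_fin]
        nlinarith
      refine ⟨[⟨u, hu⟩], 0, {0}, ∅, rfl, ?_, by simp, by simp, by simp, by simp, ?_, by simp,
        by simp, by simp⟩
      · intro x hx
        have := (alg.feasible _).1 x hx
        simpa using this
      · intro p hp q hq hpq
        simp only [Finset.mem_singleton] at hp hq
        omega
    | succ n ih =>
      intro hn
      rcases ih (by omega) with hw | ⟨l, h, P, Q, hl, I⟩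
      · exact Or.inl hw
      · by_cases hQ : Q.card < k
        · right
          obtain ⟨l', h', P', Q', hl', I'⟩ := step hk hε1 alg l h P Q I hQ (by omega)
          exact ⟨l', h', P', Q', by omega, I'⟩
        · exact Or.inl ⟨l, win hk hε0 alg l h P Q I (Or.inr (by omega))⟩
  rcases key (2 * k - 2) (by omega) with hw | ⟨l, h, P, Q, hl, I⟩
  · exact hw
  · have := I.card
    exact ⟨l, win hk hε0 alg l h P Q I (by omega)⟩
end

section
/- Fix an integer a ≥ 4 and set ℓ = 2^a, k = 100·ℓ·a + 1, d = ℓ + 400·ℓ²·a, and fix a real ε with 0 < ε < 1/2. Consider items that are k-element subsets u of Fin d, with weight vector w_u(i) = 1 − ε if i ∈ u and w_u(i) = 0 otherwise. There exists a finitely supported probability mass function μ on instances (lists of k-element subsets of Fin d) such that: (i) every list l in the support of μ satisfies OPT(l) ≥ ℓ; and (ii) for every deterministic online algorithm with free disposal A, the expectation ∑' l, μ(l) · |A(l)| ≤ 6. (Since ℓ = Θ(k / log k), by Yao's principle this shows that no randomized algorithm has competitive ratio o(k / log k) for instances with slack ε, even for the utility function f(S) = |S|.) -/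
open scoped BigOperators ENNReal

/-- Weight vectors of items that are `k`-element subsets of `Fin d`:
weight `1 - ε` on each dimension of the subset, `0` elsewhere. -/
noncomputable def Wslack (d k : ℕ) (ε : ℝ)
    (u : {u : Finset (Fin d) // u.card = k}) (i : Fin d) : ℝ :=
  if i ∈ u.val then 1 - ε else 0

/-- The ground set of the construction. -/
abbrev Ground (a : ℕ) : Type :=
  Fin (2 ^ a) ⊕ ((Fin (2 ^ a) × Fin a × Bool × Fin (2 ^ a)) ⊕
    (Fin (2 ^ a) × Fin (100 * 2 ^ a * a + 1)))

/-- The element of the `i`-th item with letter `c` associated with phase `j` and bit `b`. -/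
def coreElt {a : ℕ} (e : Fin (2 ^ a) → Fin a → Bool) (s : Fin (2 ^ a) → Fin (2 ^ a))
    (i c : Fin (2 ^ a)) (q : Fin (2 ^ a) × Fin a) : Ground a :=
  if q.1 < i then Sum.inr (Sum.inl (q.1, q.2, !(e (s q.1) q.2), i))
  else Sum.inr (Sum.inl (i, q.2, e c q.2, q.1))

/-- Unpadded item. -/
def coreSet {a : ℕ} (e : Fin (2 ^ a) → Fin a → Bool) (s : Fin (2 ^ a) → Fin (2 ^ a))
    (i c : Fin (2 ^ a)) : Finset (Ground a) :=
  insert (Sum.inl i) (Finset.univ.image (coreElt e s i c))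

/-- Padding of size `m` for phase `i`. -/
def padSet {a : ℕ} (i : Fin (2 ^ a)) (m : ℕ) : Finset (Ground a) :=
  (Finset.univ.filter (fun x : Fin (100 * 2 ^ a * a + 1) => x.val < m)).image
    (fun x => Sum.inr (Sum.inr (i, x)))

/-- Padded item. -/
def fullSet {a : ℕ} (e : Fin (2 ^ a) → Fin a → Bool) (s : Fin (2 ^ a) → Fin (2 ^ a))
    (i c : Fin (2 ^ a)) : Finset (Ground a) :=
  coreSet e s i c ∪ padSet i (100 * 2 ^ a * a + 1 - (coreSet e s i c).card)

theorem fullSet_card {a : ℕ} (e : Fin (2 ^ a) → Fin a → Bool)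
    (s : Fin (2 ^ a) → Fin (2 ^ a)) (i c : Fin (2 ^ a)) :
    (fullSet e s i c).card = 100 * 2 ^ a * a + 1 := by
  have h1 : (coreSet e s i c).card ≤ 100 * 2 ^ a * a + 1 := by
    unfold coreSet
    refine (Finset.card_insert_le _ _).trans ?_
    have := Finset.card_image_le (s := Finset.univ) (f := coreElt e s i c)
    simp only [Finset.card_univ, Fintype.card_prod, Fintype.card_fin] at this
    nlinarith [Nat.zero_le (2 ^ a * a)]
  unfold fullSet
  rw [Finset.card_union_of_disjoint]
  · unfold padSet
    rw [Finset.card_image_of_injective, Fin.card_filter_val_lt]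
    · omega
    · intro x y h
      simpa using h
  · rw [Finset.disjoint_left]
    intro x hx hy
    simp only [coreSet, padSet, coreElt, Finset.mem_insert, Finset.mem_image] at hx hy
    obtain ⟨y, -, rfl⟩ := hy
    rcases hx with hx | ⟨q, -, hq⟩
    · simp at hx
    · split_ifs at hq <;> simp at hq

theorem exists_items (a : ℕ) (ha : 4 ≤ a) :
    ∃ item : (Fin (2 ^ a) → Fin (2 ^ a)) → Fin (2 ^ a) → Fin (2 ^ a) →
        {u : Finset (Fin (2 ^ a + 400 * (2 ^ a) ^ 2 * a)) // u.card = 100 * 2 ^ a * a + 1},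
      (∀ s s' i c, (∀ j < i, s j = s' j) → item s i c = item s' i c) ∧
      (∀ s i c c', ∃ x, x ∈ (item s i c).1 ∧ x ∈ (item s i c').1) ∧
      (∀ s i j c c', i < j → c ≠ s i → ∃ x, x ∈ (item s i c).1 ∧ x ∈ (item s j c').1) ∧
      (∀ s i j, i ≠ j → Disjoint (item s i (s i)).1 (item s j (s j)).1) := by
  have hcard : Fintype.card (Ground a) ≤ Fintype.card (Fin (2 ^ a + 400 * (2 ^ a) ^ 2 * a)) := by
    simp only [Ground, Fintype.card_sum, Fintype.card_prod, Fintype.card_fin, Fintype.card_bool]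
    have h1 : 1 ≤ 2 ^ a := Nat.one_le_two_pow
    generalize 2 ^ a = L at h1
    have h2 : L ≤ L ^ 2 * a := by nlinarith [Nat.mul_le_mul h1 h1, Nat.mul_le_mul (Nat.le_refl (L^2)) ha]
    nlinarith
  obtain ⟨φ⟩ := Function.Embedding.nonempty_of_card_le hcard
  have he : Fintype.card (Fin (2 ^ a)) = Fintype.card (Fin a → Bool) := by simp
  let e := Fintype.equivOfCardEq he
  refine ⟨fun s i c => ⟨(fullSet e s i c).map φ, by rw [Finset.card_map, fullSet_card]⟩,
    ?_, ?_, ?_, ?_⟩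
  · intro s s' i c h
    have : coreSet e s i c = coreSet e s' i c := by
      have : coreElt e s i c = coreElt e s' i c := by
        funext q
        unfold coreElt
        split_ifs with hq
        · rw [h _ hq]
        · rfl
      unfold coreSet
      rw [this]
    simp only [fullSet, this]
  · intro s i c c'
    refine ⟨φ (Sum.inl i), ?_, ?_⟩ <;>
      simp [fullSet, coreSet]
  · intro s i j c c' hij hc
    have : e c ≠ e (s i) := fun h => hc (e.injective h)
    obtain ⟨b, hb⟩ := Function.ne_iff.mp this
    refine ⟨φ (Sum.inr (Sum.inl (i, b, e c b, j))), ?_, ?_⟩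
    · refine Finset.mem_map_of_mem _ ?_
      refine Finset.mem_union_left _ (Finset.mem_insert_of_mem ?_)
      refine Finset.mem_image.mpr ⟨(j, b), Finset.mem_univ _, ?_⟩
      simp [coreElt, hij.not_gt]
    · refine Finset.mem_map_of_mem _ ?_
      refine Finset.mem_union_left _ (Finset.mem_insert_of_mem ?_)
      refine Finset.mem_image.mpr ⟨(i, b), Finset.mem_univ _, ?_⟩
      simp only [coreElt, hij, if_true]
      have : (!(e (s i) b)) = e c b := by
        revert hb
        cases e c b <;> cases e (s i) b <;> simp
      rw [this]
  · intro s i j hij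
    simp only [Finset.disjoint_map]
    rw [Finset.disjoint_left]
    intro x hx hy
    simp only [fullSet, coreSet, padSet, coreElt, Finset.mem_union, Finset.mem_insert,
      Finset.mem_image] at hx hy
    rcases hx with (rfl | ⟨q, -, rfl⟩) | ⟨y, -, rfl⟩
    · rcases hy with (hy | ⟨q, -, hy⟩) | ⟨y, -, hy⟩
      · simp at hy; exact hij hy
      · split_ifs at hy <;> simp at hy
      · simp at hy
    · rcases hy with (hy | ⟨q', -, hy⟩) | ⟨y, -, hy⟩
      · split_ifs at hy
      · obtain ⟨q1, q2⟩ := q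
        obtain ⟨q1', q2'⟩ := q'
        split_ifs at hy with h1 h2 h2 <;>
          simp only [Sum.inr.injEq, Sum.inl.injEq, Prod.mk.injEq] at hy h1 h2
        · exact hij hy.2.2.2.symm
        · obtain ⟨rfl, rfl, hb, rfl⟩ := hy
          simp at hb
        · obtain ⟨rfl, rfl, hb, rfl⟩ := hy
          simp at hb
        · exact hij hy.1.symm
      · split_ifs at hy <;> simp at hy
    · rcases hy with (hy | ⟨q', -, hy⟩) | ⟨y, -, hy⟩
      · simp at hy
      · split_ifs at hy <;> simp at hy
      · simp at hy; exact hij hy.1.symm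

/-- Disposed positions never come back. -/
theorem alg_take {Item : Type*} {d : ℕ} {w : Item → Fin d → ℝ} (alg : OnlineAlg w)
    (l l' : List Item) (p : ℕ) (hp : p < l.length) (h : p ∈ alg.A (l ++ l')) : p ∈ alg.A l := by
  induction l' using List.reverseRecOn with
  | nil => simpa using h
  | append_singleton t u ih =>
    apply ih
    rw [← List.append_assoc] at h
    have := alg.online _ _ h
    simp only [Finset.mem_union, Finset.mem_singleton, List.length_append] at this
    rcases this with h | h
    · exact h
    · omega

theorem no_conflict {d k : ℕ} {ε : ℝ} (hε1 : ε < 1 / 2)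
    (l : List {u : Finset (Fin d) // u.card = k}) (P : Finset ℕ)
    (hP : Feasible (Wslack d k ε) l P) (p q : ℕ) (hp : p ∈ P) (hq : q ∈ P)
    (u v) (hu : l[p]? = some u) (hv : l[q]? = some v) (x : Fin d) (hxu : x ∈ u.1)
    (hxv : x ∈ v.1) : p = q := by
  by_contra hne
  have h := hP.2 x
  have h0 : ∀ r ∈ P, r ∉ ({p, q} : Finset ℕ) → 0 ≤ weightAt (Wslack d k ε) l r x := by
    intro r _ _
    unfold weightAt
    cases l[r]? with
    | none => simp
    | some z =>
      simp only [Option.map_some, Option.getD_some, Wslack]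
      split_ifs <;> linarith
  have hsub : ({p, q} : Finset ℕ) ⊆ P := by
    intro r hr
    simp only [Finset.mem_insert, Finset.mem_singleton] at hr
    rcases hr with rfl | rfl <;> assumption
  have h2 := Finset.sum_le_sum_of_subset_of_nonneg hsub h0
  rw [Finset.sum_pair hne] at h2
  simp [weightAt, hu, hv, Wslack, hxu, hxv] at h2
  simp only [weightAt, Wslack] at h
  linarith

/-- The instance for hidden string `s`. -/
def inst {L : ℕ} {Item : Type*} (item : (Fin L → Fin L) → Fin L → Fin L → Item)
    (s : Fin L → Fin L) : List Item :=
  List.ofFn (fun q : Fin (L * L) => item s q.divNat q.modNat)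

theorem inst_length {L : ℕ} {Item : Type*} (item : (Fin L → Fin L) → Fin L → Fin L → Item)
    (s : Fin L → Fin L) : (inst item s).length = L * L := by simp [inst]

/-- Position of item `c` of phase `i`. -/
def pos {L : ℕ} (i c : Fin L) : ℕ := (finProdFinEquiv (i, c)).val

theorem pos_eq {L : ℕ} (i c : Fin L) : pos i c = c + L * i := by
  simp [pos, finProdFinEquiv]

theorem pos_lt {L : ℕ} (i c : Fin L) : pos i c < L * L := (finProdFinEquiv (i, c)).isLt

theorem pos_inj {L : ℕ} {i c i' c' : Fin L} (h : pos i c = pos i' c') : i = i' ∧ c = c' := by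
  have := finProdFinEquiv.injective (Fin.ext h)
  simpa using this

theorem exists_pos {L : ℕ} (p : ℕ) (hp : p < L * L) : ∃ i c : Fin L, p = pos i c := by
  refine ⟨(finProdFinEquiv.symm ⟨p, hp⟩).1, (finProdFinEquiv.symm ⟨p, hp⟩).2, ?_⟩
  simp [pos, Nat.mod_add_div]

theorem inst_get {L : ℕ} {Item : Type*} (item : (Fin L → Fin L) → Fin L → Fin L → Item)
    (s : Fin L → Fin L) (i c : Fin L) : (inst item s)[pos i c]? = some (item s i c) := by
  unfold inst
  rw [List.getElem?_ofFn, dif_pos (pos_lt i c)]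
  have : (finProdFinEquiv.symm (⟨pos i c, pos_lt i c⟩ : Fin (L * L))) = (i, c) := by
    rw [Equiv.symm_apply_eq]; rfl
  have h1 : (⟨pos i c, pos_lt i c⟩ : Fin (L * L)).divNat = i := congrArg Prod.fst this
  have h2 : (⟨pos i c, pos_lt i c⟩ : Fin (L * L)).modNat = c := congrArg Prod.snd this
  rw [h1, h2]

theorem inst_take {L : ℕ} {Item : Type*} (item : (Fin L → Fin L) → Fin L → Fin L → Item)
    (h1 : ∀ s s' i c, (∀ j < i, s j = s' j) → item s i c = item s' i c)
    (s s' : Fin L → Fin L) (i : Fin L) (h : ∀ j < i, s j = s' j) :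
    (inst item s).take (L * (i + 1)) = (inst item s').take (L * (i + 1)) := by
  apply List.ext_getElem?
  intro p
  rw [List.getElem?_take, List.getElem?_take]
  split_ifs with hp
  · have hp' : p < L * L := lt_of_lt_of_le hp (Nat.mul_le_mul_left _ i.isLt)
    obtain ⟨j, c, rfl⟩ := exists_pos p hp'
    rw [inst_get, inst_get, h1 s s' j c]
    intro j' hj'
    apply h
    refine lt_of_lt_of_le hj' ?_
    rw [pos_eq] at hp
    by_contra hlt
    have : i.val + 1 ≤ j.val := by
      rw [not_le] at hlt; exact hlt
    have := Nat.mul_le_mul_left L this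
    omega
  · rfl

theorem opt_ge {L d k : ℕ} {ε : ℝ} (hε0 : 0 < ε)
    (item : (Fin L → Fin L) → Fin L → Fin L → {u : Finset (Fin d) // u.card = k})
    (h4 : ∀ s i j, i ≠ j → Disjoint (item s i (s i)).1 (item s j (s j)).1)
    (s : Fin L → Fin L) : L ≤ OPT (Wslack d k ε) (inst item s) := by
  unfold OPT
  apply le_csSup
  · refine ⟨L * L, ?_⟩
    rintro n ⟨P, hP, rfl⟩
    have : P ⊆ Finset.range (L * L) := by
      intro p hp
      have := hP.1 p hp
      rw [inst_length] at this
      simpa using this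
    simpa using Finset.card_le_card this
  · have hinj : Function.Injective (fun i : Fin L => pos i (s i)) := fun i j h => (pos_inj h).1
    refine ⟨Finset.univ.image (fun i => pos i (s i)), ⟨?_, ?_⟩, ?_⟩
    · intro p hp
      obtain ⟨i, -, rfl⟩ := Finset.mem_image.mp hp
      rw [inst_length]
      exact pos_lt _ _
    · intro x
      rw [Finset.sum_image (fun i _ j _ h => hinj h)]
      simp only [weightAt, inst_get, Option.map_some, Option.getD_some, Wslack]
      by_cases hx : ∃ i, x ∈ (item s i (s i)).1
      · obtain ⟨i, hi⟩ := hx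
        rw [Finset.sum_eq_single i]
        · rw [if_pos hi]; linarith
        · intro j _ hj
          rw [if_neg]
          exact fun hxj => (Finset.disjoint_left.mp (h4 s j i hj)) hxj hi
        · simp
      · push Not at hx
        rw [Finset.sum_eq_zero]
        · norm_num
        · intro i _
          rw [if_neg (hx i)]
    · rw [Finset.card_image_of_injective _ hinj]; simp

theorem card_bound {L d k : ℕ} {ε : ℝ} (hε1 : ε < 1 / 2)
    (item : (Fin L → Fin L) → Fin L → Fin L → {u : Finset (Fin d) // u.card = k})
    (h2 : ∀ s i c c', ∃ x, x ∈ (item s i c).1 ∧ x ∈ (item s i c').1)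
    (h3 : ∀ s i j c c', i < j → c ≠ s i → ∃ x, x ∈ (item s i c).1 ∧ x ∈ (item s j c').1)
    (alg : OnlineAlg (Wslack d k ε)) (s : Fin L → Fin L) :
    (alg.A (inst item s)).card ≤
      (Finset.univ.filter (fun i => pos i (s i) ∈ alg.A (inst item s))).card + 1 := by
  classical
  set S := alg.A (inst item s) with hS
  have hf := alg.feasible (inst item s)
  set G := (Finset.univ.filter (fun i => pos i (s i) ∈ S)).image (fun i => pos i (s i)) with hG
  have hB : (S \ G).card ≤ 1 := by
    rw [Finset.card_le_one]
    intro p hp q hq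
    rw [Finset.mem_sdiff] at hp hq
    have hpl := hf.1 p hp.1
    have hql := hf.1 q hq.1
    rw [inst_length] at hpl hql
    obtain ⟨i, c, rfl⟩ := exists_pos p hpl
    obtain ⟨j, c', rfl⟩ := exists_pos q hql
    have bad : ∀ i c, pos i c ∈ S → pos i c ∉ G → c ≠ s i := by
      rintro i c h hg rfl
      exact hg (Finset.mem_image.mpr ⟨i, by simpa using h, rfl⟩)
    have hc := bad i c hp.1 hp.2
    have hc' := bad j c' hq.1 hq.2
    have hx : ∃ x, x ∈ (item s i c).1 ∧ x ∈ (item s j c').1 := by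
      rcases lt_trichotomy i j with h | h | h
      · exact h3 s i j c c' h hc
      · subst h; exact h2 s i c c'
      · obtain ⟨x, hx1, hx2⟩ := h3 s j i c' c h hc'
        exact ⟨x, hx2, hx1⟩
    obtain ⟨x, hx1, hx2⟩ := hx
    exact no_conflict hε1 _ _ hf _ _ hp.1 hq.1 _ _ (inst_get item s i c) (inst_get item s j c')
      x hx1 hx2
  have h1 : S.card ≤ G.card + (S \ G).card := by
    have := Finset.card_le_card (show S ⊆ G ∪ (S \ G) by simp)
    exact this.trans (Finset.card_union_le _ _)
  have h2 : G.card ≤ _ := Finset.card_image_le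
  omega

theorem phase_bound {L d k : ℕ} {ε : ℝ} (hε1 : ε < 1 / 2)
    (item : (Fin L → Fin L) → Fin L → Fin L → {u : Finset (Fin d) // u.card = k})
    (h1 : ∀ s s' i c, (∀ j < i, s j = s' j) → item s i c = item s' i c)
    (h2 : ∀ s i c c', ∃ x, x ∈ (item s i c).1 ∧ x ∈ (item s i c').1)
    (alg : OnlineAlg (Wslack d k ε)) (i : Fin L) :
    (Finset.univ.filter (fun s : Fin L → Fin L => pos i (s i) ∈ alg.A (inst item s))).card * L
      ≤ Fintype.card (Fin L → Fin L) := by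
  classical
  set G := Finset.univ.filter (fun s : Fin L → Fin L => pos i (s i) ∈ alg.A (inst item s))
  have key : (G ×ˢ (Finset.univ : Finset (Fin L))).card ≤
      (Finset.univ : Finset (Fin L → Fin L)).card := by
    apply Finset.card_le_card_of_injOn (fun z => Function.update z.1 i z.2)
    · intro z _; simp
    · rintro ⟨s, c⟩ hs ⟨s', c'⟩ hs' h
      simp only [Finset.coe_product, Set.mem_prod, Finset.mem_coe] at hs hs'
      have hs := (Finset.mem_filter.mp hs.1).2
      have hs' := (Finset.mem_filter.mp hs'.1).2
      simp only at h hs hs'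
      have hc : c = c' := by simpa using congrFun h i
      have hoff : ∀ j, j ≠ i → s j = s' j := by
        intro j hj
        simpa [hj] using congrFun h j
      have htake := inst_take item h1 s s' i (fun j hj => hoff j hj.ne)
      have hpl : ∀ c : Fin L, pos i c < L * (i + 1) := by
        intro c; rw [pos_eq, Nat.mul_add]; have := c.isLt; omega
      have hlen : ∀ s, ((inst item s).take (L * (i + 1))).length = L * (i + 1) := by
        intro s
        rw [List.length_take, inst_length]
        exact min_eq_left (Nat.mul_le_mul_left _ i.isLt)
      have m1 : pos i (s i) ∈ alg.A ((inst item s).take (L * (i + 1))) := by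
        apply alg_take alg _ ((inst item s).drop (L * (i + 1)))
        · rw [hlen]; exact hpl _
        · rwa [List.take_append_drop]
      have m2 : pos i (s' i) ∈ alg.A ((inst item s').take (L * (i + 1))) := by
        apply alg_take alg _ ((inst item s').drop (L * (i + 1)))
        · rw [hlen]; exact hpl _
        · rwa [List.take_append_drop]
      rw [← htake] at m2
      have g : ∀ c : Fin L, ((inst item s).take (L * (i + 1)))[pos i c]? = some (item s i c) := by
        intro c
        rw [List.getElem?_take, if_pos (hpl c), inst_get]
      obtain ⟨x, hx1, hx2⟩ := h2 s i (s i) (s' i)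
      have := no_conflict hε1 _ _ (alg.feasible _) _ _ m1 m2 _ _ (g _) (g _) x hx1 hx2
      have hsi := (pos_inj this).2
      have : s = s' := by
        funext j
        by_cases hj : j = i
        · subst hj; exact hsi
        · exact hoff j hj
      rw [this, hc]
  simpa [Finset.card_product] using key

theorem total_bound {L d k : ℕ} (hL : 0 < L) {ε : ℝ} (hε1 : ε < 1 / 2)
    (item : (Fin L → Fin L) → Fin L → Fin L → {u : Finset (Fin d) // u.card = k})
    (h1 : ∀ s s' i c, (∀ j < i, s j = s' j) → item s i c = item s' i c)
    (h2 : ∀ s i c c', ∃ x, x ∈ (item s i c).1 ∧ x ∈ (item s i c').1)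
    (h3 : ∀ s i j c c', i < j → c ≠ s i → ∃ x, x ∈ (item s i c).1 ∧ x ∈ (item s j c').1)
    (alg : OnlineAlg (Wslack d k ε)) :
    ∑ s : Fin L → Fin L, (alg.A (inst item s)).card ≤ 2 * Fintype.card (Fin L → Fin L) := by
  classical
  have hb : (∑ s : Fin L → Fin L,
      (Finset.univ.filter (fun i => pos i (s i) ∈ alg.A (inst item s))).card)
      ≤ Fintype.card (Fin L → Fin L) := by
    have hswap : (∑ s : Fin L → Fin L,
      (Finset.univ.filter (fun i => pos i (s i) ∈ alg.A (inst item s))).card) =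
      ∑ i : Fin L, (Finset.univ.filter
        (fun s : Fin L → Fin L => pos i (s i) ∈ alg.A (inst item s))).card := by
      simp only [Finset.card_filter]
      exact Finset.sum_comm
    rw [hswap]
    refine Nat.le_of_mul_le_mul_right ?_ hL
    rw [Finset.sum_mul]
    refine (Finset.sum_le_sum fun i _ => phase_bound hε1 item h1 h2 alg i).trans ?_
    rw [Finset.sum_const, Finset.card_univ, Fintype.card_fin, smul_eq_mul, mul_comm]
  calc _ ≤ ∑ s : Fin L → Fin L,
      ((Finset.univ.filter (fun i => pos i (s i) ∈ alg.A (inst item s))).card + 1) :=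
        Finset.sum_le_sum fun s _ => card_bound hε1 item h2 h3 alg s
    _ ≤ _ := by
      rw [Finset.sum_add_distrib, Finset.sum_const, Finset.card_univ, smul_eq_mul]
      omega

theorem tsum_map_uniform {α β : Type*} [Fintype α] [Nonempty α] (g : α → β) (f : β → ℝ≥0∞) :
    ∑' b, ((PMF.uniformOfFintype α).map g) b * f b =
      (Fintype.card α : ℝ≥0∞)⁻¹ * ∑ x, f (g x) := by
  classical
  simp only [PMF.map_apply, ← ENNReal.tsum_mul_right]
  rw [ENNReal.tsum_comm, tsum_fintype, Finset.mul_sum]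
  refine Finset.sum_congr rfl fun x _ => ?_
  rw [tsum_eq_single (g x)]
  · simp
  · intro b hb
    simp [hb]

/-- Hardness for randomized algorithms with slack: with `ℓ = 2^a`, sparsity
`k = 100·ℓ·log₂ℓ + 1` and `d = ℓ + 400·ℓ²·log₂ℓ` dimensions, there is a finitely
supported distribution over instances whose offline optimum is always at least `ℓ`,
while every deterministic online algorithm with free disposal keeps at most `6` items
in expectation. -/
theorem statement1 (a : ℕ) (ha : 4 ≤ a) (ε : ℝ) (hε0 : 0 < ε) (hε1 : ε < 1 / 2) :
    ∃ μ : PMF (List {u : Finset (Fin (2 ^ a + 400 * (2 ^ a) ^ 2 * a)) //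
        u.card = 100 * 2 ^ a * a + 1}),
      μ.support.Finite ∧
      (∀ l ∈ μ.support,
        2 ^ a ≤ OPT (Wslack (2 ^ a + 400 * (2 ^ a) ^ 2 * a) (100 * 2 ^ a * a + 1) ε) l) ∧
      (∀ alg : OnlineAlg (Wslack (2 ^ a + 400 * (2 ^ a) ^ 2 * a) (100 * 2 ^ a * a + 1) ε),
        ∑' l, μ l * ((alg.A l).card : ℝ≥0∞) ≤ 6) := by
  obtain ⟨item, h1, h2, h3, h4⟩ := exists_items a ha
  have hL : 0 < 2 ^ a := Nat.two_pow_pos a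
  haveI : Nonempty (Fin (2 ^ a) → Fin (2 ^ a)) := ⟨id⟩
  refine ⟨(PMF.uniformOfFintype (Fin (2 ^ a) → Fin (2 ^ a))).map (inst item), ?_, ?_, ?_⟩
  · rw [PMF.support_map]
    exact (Set.toFinite _).image _
  · intro l hl
    rw [PMF.support_map] at hl
    obtain ⟨s, -, rfl⟩ := hl
    exact opt_ge hε0 item h4 s
  · intro alg
    rw [tsum_map_uniform (inst item) (fun l => ((alg.A l).card : ℝ≥0∞))]
    have h := total_bound hL hε1 item h1 h2 h3 alg
    have hN : (Fintype.card (Fin (2 ^ a) → Fin (2 ^ a)) : ℝ≥0∞) ≠ 0 := by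
      exact_mod_cast Fintype.card_ne_zero
    have hN' : (Fintype.card (Fin (2 ^ a) → Fin (2 ^ a)) : ℝ≥0∞) ≠ ⊤ := ENNReal.natCast_ne_top _
    have h' : (∑ s : Fin (2 ^ a) → Fin (2 ^ a), ((alg.A (inst item s)).card : ℝ≥0∞)) ≤
        2 * (Fintype.card (Fin (2 ^ a) → Fin (2 ^ a)) : ℝ≥0∞) := by
      exact_mod_cast h
    calc _ ≤ (Fintype.card (Fin (2 ^ a) → Fin (2 ^ a)) : ℝ≥0∞)⁻¹ *
          (2 * (Fintype.card (Fin (2 ^ a) → Fin (2 ^ a)) : ℝ≥0∞)) := by gcongr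
      _ = 2 := by
        rw [mul_left_comm, ENNReal.inv_mul_cancel hN hN', mul_one]
      _ ≤ 6 := by norm_num
end

section
/- Fix an integer m ≥ 1 and set d = 2m. There exists a finitely supported probability mass function μ on instances whose items have weight vectors lying in [0,1]^d, such that: (i) every list l in the support of μ satisfies OPT(l) ≥ m = d/2; and (ii) for every deterministic online algorithm with free disposal A, the expectation ∑' l, μ(l) · |A(l)| ≤ 2. (By Yao's principle this shows that no randomized algorithm for online vector packing without slack has competitive ratio o(d), and since the constructed weight vectors have sparsity k = d, no competitive ratio o(k), even for the utility function f(S) = |S|.) -/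
open scoped BigOperators ENNReal

namespace VP

/-- exponent: side 0 uses `k+1`, side 1 uses `m-k`. -/
def ex (m s k : ℕ) : ℕ := if s = 0 then k + 1 else m - k

noncomputable def gap (m s k : ℕ) : ℝ := (1 / ((m : ℝ) + 2)) ^ ex m s k

/-- The item at position `p` when the good indices are given by `K`. -/
noncomputable def item (m : ℕ) (K : ℕ → ℕ) (p : ℕ) : Fin (2 * m) → ℝ := fun i =>
  if i.val / 2 = p / m then 1 - gap m (i.val % 2) (p % m)
  else if i.val / 2 < p / m then gap m (i.val % 2) (K (i.val / 2)) / m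
  else 0

noncomputable def pre (m : ℕ) (K : ℕ → ℕ) (n : ℕ) : List (Fin (2 * m) → ℝ) :=
  (List.range n).map (item m K)

lemma gap_pos (m s k : ℕ) : 0 < gap m s k := by unfold gap; positivity

lemma base_le_one (m : ℕ) : 1 / ((m : ℝ) + 2) ≤ 1 := by
  rw [div_le_one (by positivity)]
  have : (0 : ℝ) ≤ m := by positivity
  linarith

lemma gap_le_one (m s k : ℕ) : gap m s k ≤ 1 := by
  unfold gap
  exact pow_le_one₀ (by positivity) (base_le_one m)

lemma gap_lt_half (m s k : ℕ) (hm : 1 ≤ m) (hk : k < m) : gap m s k < 1 / 2 := by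
  unfold gap
  have h1 : ex m s k ≠ 0 := by unfold ex; split_ifs <;> omega
  have h2 : (1 / ((m : ℝ) + 2)) ^ ex m s k ≤ 1 / ((m : ℝ) + 2) :=
    pow_le_of_le_one (by positivity) (base_le_one m) h1
  have h3 : 1 / ((m : ℝ) + 2) < 1 / 2 := by
    have : (1 : ℝ) ≤ m := by exact_mod_cast hm
    apply one_div_lt_one_div_of_lt <;> linarith
  linarith

lemma gap_sep (m s a b : ℕ) (hm : 1 ≤ m) (h : ex m s a < ex m s b) :
    gap m s b < gap m s a / m := by
  unfold gap
  have hm' : (1 : ℝ) ≤ m := by exact_mod_cast hm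
  have h1 : (1 / ((m : ℝ) + 2)) ^ ex m s b ≤ (1 / ((m : ℝ) + 2)) ^ (ex m s a + 1) :=
    pow_le_pow_of_le_one (by positivity) (base_le_one m) h
  have h3 : 1 / ((m : ℝ) + 2) < 1 / m := by
    apply one_div_lt_one_div_of_lt <;> linarith
  have h4 : 0 < (1 / ((m : ℝ) + 2)) ^ ex m s a := by positivity
  rw [pow_succ] at h1
  calc _ ≤ _ := h1
    _ < (1 / ((m : ℝ) + 2)) ^ ex m s a * (1 / m) := by gcongr
    _ = _ := by ring

lemma item_nonneg (m : ℕ) (K : ℕ → ℕ) (p : ℕ) (i : Fin (2 * m)) : 0 ≤ item m K p i := by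
  unfold item
  have := gap_le_one m (i.val % 2) (p % m)
  have := gap_pos m (i.val % 2) (K (i.val / 2))
  split_ifs
  · linarith
  · positivity
  · exact le_rfl

lemma item_le_one (m : ℕ) (hm : 1 ≤ m) (K : ℕ → ℕ) (p : ℕ) (i : Fin (2 * m)) :
    item m K p i ≤ 1 := by
  unfold item
  have := gap_pos m (i.val % 2) (p % m)
  have h2 := gap_le_one m (i.val % 2) (K (i.val / 2))
  have hm' : (1 : ℝ) ≤ m := by exact_mod_cast hm
  split_ifs
  · linarith
  · rw [div_le_one (by linarith)]; linarith
  · exact zero_le_one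

lemma weightAt_pre (m : ℕ) (K : ℕ → ℕ) (n p : ℕ) (hp : p < n) (i : Fin (2 * m)) :
    weightAt (fun u : Fin (2 * m) → ℝ => u) (pre m K n) p i = item m K p i := by
  simp [weightAt, pre, hp]

lemma length_pre (m : ℕ) (K : ℕ → ℕ) (n : ℕ) : (pre m K n).length = n := by simp [pre]

lemma pair (m : ℕ) (K : ℕ → ℕ) (n : ℕ) (S : Finset ℕ)
    (hS : Feasible (fun u : Fin (2 * m) → ℝ => u) (pre m K n) S)
    {p q : ℕ} (hp : p ∈ S) (hq : q ∈ S) (hpq : p ≠ q) (i : Fin (2 * m)) :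
    item m K p i + item m K q i ≤ 1 := by
  obtain ⟨h1, h2⟩ := hS
  have h3 : ∑ x ∈ S, item m K x i ≤ 1 := by
    rw [← Finset.sum_congr rfl (fun x hx => weightAt_pre m K n x (by
      simpa [length_pre] using h1 x hx) i)]
    exact h2 i
  calc _ = ∑ x ∈ ({p, q} : Finset ℕ), item m K x i := by rw [Finset.sum_pair hpq]
    _ ≤ ∑ x ∈ S, item m K x i := by
        apply Finset.sum_le_sum_of_subset_of_nonneg
        · intro x hx
          simp only [Finset.mem_insert, Finset.mem_singleton] at hx
          rcases hx with rfl | rfl <;> assumption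
        · intros; exact item_nonneg _ _ _ _
    _ ≤ 1 := h3

lemma phase_ne (m : ℕ) (hm : 1 ≤ m) (K : ℕ → ℕ) (n : ℕ) (hn : n ≤ m * m) (S : Finset ℕ)
    (hS : Feasible (fun u : Fin (2 * m) → ℝ => u) (pre m K n) S)
    {p q : ℕ} (hp : p ∈ S) (hq : q ∈ S) (h : p / m = q / m) : p = q := by
  by_contra hpq
  have hpn : p < m * m := lt_of_lt_of_le (by simpa [length_pre] using hS.1 p hp) hn
  have ht : p / m < m := Nat.div_lt_of_lt_mul hpn
  have := pair m K n S hS hp hq hpq ⟨2 * (p / m), by omega⟩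
  have e1 : 2 * (p / m) / 2 = p / m := by omega
  simp only [item, e1, h, if_true] at this
  have g1 := gap_lt_half m (2 * (q / m) % 2) (p % m) hm (Nat.mod_lt _ hm)
  have g2 := gap_lt_half m (2 * (q / m) % 2) (q % m) hm (Nat.mod_lt _ hm)
  have e2 : 2 * (q / m) / 2 = q / m := by omega
  simp only [e2, if_true] at this
  linarith

lemma good_of_lt (m : ℕ) (hm : 1 ≤ m) (K : ℕ → ℕ) (hK : ∀ t, K t < m)
    (n : ℕ) (hn : n ≤ m * m) (S : Finset ℕ)
    (hS : Feasible (fun u : Fin (2 * m) → ℝ => u) (pre m K n) S)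
    {p q : ℕ} (hp : p ∈ S) (hq : q ∈ S) (h : p < q) : p % m = K (p / m) := by
  have hne : p / m ≠ q / m := fun e => h.ne (phase_ne m hm K n hn S hS hp hq e)
  have hlt : p / m < q / m := lt_of_le_of_ne (Nat.div_le_div_right h.le) hne
  have hpn : p < m * m := lt_of_lt_of_le (by simpa [length_pre] using hS.1 p hp) hn
  have ht : p / m < m := Nat.div_lt_of_lt_mul hpn
  have key : ∀ s, s < 2 → ¬ ex m s (K (p / m)) < ex m s (p % m) := by
    intro s hs hex
    have := pair m K n S hS hp hq h.ne ⟨2 * (p / m) + s, by omega⟩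
    have e1 : (2 * (p / m) + s) / 2 = p / m := by omega
    have e2 : (2 * (p / m) + s) % 2 = s := by omega
    simp only [item, e1, e2, if_true, hne, if_false, hlt] at this
    have := gap_sep m s _ _ hm hex
    linarith
  have k0 := key 0 (by norm_num)
  have k1 := key 1 (by norm_num)
  have := hK (p / m)
  have := Nat.mod_lt p hm
  simp only [ex] at k0 k1
  simp at k0 k1
  omega

lemma card_le (m : ℕ) (hm : 1 ≤ m) (K : ℕ → ℕ) (hK : ∀ t, K t < m) (S : Finset ℕ)
    (hS : Feasible (fun u : Fin (2 * m) → ℝ => u) (pre m K (m * m)) S) :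
    S.card ≤ 1 + ((Finset.range m).filter (fun j => j * m + K j ∈ S)).card := by
  rcases S.eq_empty_or_nonempty with rfl | hne
  · simp
  have hq := S.max'_mem hne
  set q := S.max' hne with hqd
  have hsub : S.erase q ⊆
      ((Finset.range m).filter (fun j => j * m + K j ∈ S)).image (fun j => j * m + K j) := by
    intro p hp
    rw [Finset.mem_erase] at hp
    have hlt : p < q := lt_of_le_of_ne (S.le_max' p hp.2) hp.1
    have hg := good_of_lt m hm K hK _ le_rfl S hS hp.2 hq hlt
    have hpe : p / m * m + K (p / m) = p := by rw [← hg]; exact Nat.div_add_mod' p m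
    have hpn : p < m * m := by simpa [length_pre] using hS.1 p hp.2
    rw [Finset.mem_image]
    refine ⟨p / m, ?_, hpe⟩
    rw [Finset.mem_filter, Finset.mem_range, hpe]
    exact ⟨Nat.div_lt_of_lt_mul hpn, hp.2⟩
  have h1 := (Finset.card_le_card hsub).trans Finset.card_image_le
  have h2 := Finset.card_erase_add_one hq
  omega

lemma opt_ge (m : ℕ) (hm : 1 ≤ m) (K : ℕ → ℕ) (hK : ∀ t, K t < m) :
    m ≤ OPT (fun u : Fin (2 * m) → ℝ => u) (pre m K (m * m)) := by
  have hdiv : ∀ j, (j * m + K j) / m = j := by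
    intro j
    rw [mul_comm, Nat.mul_add_div hm, Nat.div_eq_of_lt (hK j), add_zero]
  have hmod : ∀ j, (j * m + K j) % m = K j := by
    intro j
    rw [mul_comm, Nat.mul_add_mod, Nat.mod_eq_of_lt (hK j)]
  have hinj : Function.Injective (fun j => j * m + K j) := by
    intro a b hab
    have := congrArg (· / m) hab
    simpa [hdiv] using this
  have hlt : ∀ j < m, j * m + K j < m * m := by
    intro j hj
    rw [← Nat.div_lt_iff_lt_mul hm, hdiv]; exact hj
  unfold OPT
  apply le_csSup
  · refine ⟨m * m, ?_⟩
    rintro n ⟨P, hP, rfl⟩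
    have : P ⊆ Finset.range (m * m) := by
      intro p hp
      simpa [length_pre] using hP.1 p hp
    simpa using Finset.card_le_card this
  · refine ⟨(Finset.range m).image (fun j => j * m + K j), ⟨?_, ?_⟩, ?_⟩
    · intro p hp
      rw [Finset.mem_image] at hp
      obtain ⟨j, hj, rfl⟩ := hp
      rw [length_pre]
      exact hlt j (Finset.mem_range.1 hj)
    · intro i
      rw [Finset.sum_image (fun a _ b _ h => hinj h)]
      have hi : i.val / 2 < m := by omega
      set g := gap m (i.val % 2) (K (i.val / 2)) with hg
      have hgp : 0 < g := gap_pos _ _ _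
      have hm' : (1 : ℝ) ≤ m := by exact_mod_cast hm
      have hgm : 0 < g / m := by positivity
      calc _ ≤ ∑ j ∈ Finset.range m, (g / m + if i.val / 2 = j then 1 - g else 0) := by
            apply Finset.sum_le_sum
            intro j hj
            rw [weightAt_pre m K _ _ (hlt j (Finset.mem_range.1 hj))]
            unfold item
            rw [hdiv, hmod]
            split_ifs with h1 h2
            · rw [hg, h1]; rw [hg, h1] at hgm; linarith
            · simp [hg]
            · simpa using hgm.le
        _ = 1 := by
            rw [Finset.sum_add_distrib, Finset.sum_ite_eq, if_pos (Finset.mem_range.2 hi)]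
            simp only [Finset.sum_const, Finset.card_range, nsmul_eq_mul]
            field_simp
            ring
    · rw [Finset.card_image_of_injective _ hinj, Finset.card_range]

lemma online_mono (m : ℕ) (K : ℕ → ℕ) (alg : OnlineAlg (fun u : Fin (2 * m) → ℝ => u))
    (n r p : ℕ) (hp : p < n) (h : p ∈ alg.A (pre m K (n + r))) : p ∈ alg.A (pre m K n) := by
  induction r with
  | zero => simpa using h
  | succ r ih =>
    apply ih
    have e : pre m K (n + (r + 1)) = pre m K (n + r) ++ [item m K (n + r)] := by
      simp [pre, ← add_assoc, List.range_succ]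
    rw [e] at h
    have := alg.online _ _ h
    rw [length_pre, Finset.mem_union, Finset.mem_singleton] at this
    rcases this with h | h
    · exact h
    · omega

def ext (m : ℕ) (K : Fin m → Fin m) (t : ℕ) : ℕ := if h : t < m then (K ⟨t, h⟩).val else 0

lemma ext_lt (m : ℕ) (hm : 1 ≤ m) (K : Fin m → Fin m) (t : ℕ) : ext m K t < m := by
  unfold ext; split_ifs
  · exact Fin.isLt _
  · omega

lemma pre_congr (m j : ℕ) (hm : 1 ≤ m) (K K' : ℕ → ℕ) (h : ∀ t < j, K t = K' t) :
    pre m K ((j + 1) * m) = pre m K' ((j + 1) * m) := by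
  unfold pre
  apply List.map_congr_left
  intro p hp
  rw [List.mem_range, ← Nat.div_lt_iff_lt_mul hm] at hp
  funext i
  unfold item
  split_ifs with h1 h2
  · rfl
  · rw [h _ (by omega)]
  · rfl

open Classical in
lemma count (m : ℕ) (hm : 1 ≤ m) (alg : OnlineAlg (fun u : Fin (2 * m) → ℝ => u))
    (j : Fin m) :
    (Finset.univ.filter (fun K : Fin m → Fin m =>
      j.val * m + ext m K j ∈ alg.A (pre m (ext m K) (m * m)))).card * m ≤ m ^ m := by
  set B := Finset.univ.filter (fun K : Fin m → Fin m =>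
      j.val * m + ext m K j ∈ alg.A (pre m (ext m K) (m * m))) with hB
  have hinj : Set.InjOn (fun x : (Fin m → Fin m) × Fin m => Function.update x.1 j x.2)
      (B ×ˢ (Finset.univ : Finset (Fin m)) : Finset _) := by
    rintro ⟨K, v⟩ hK ⟨K', v'⟩ hK' heq
    simp only [Finset.coe_product, Set.mem_prod, Finset.mem_coe, Finset.mem_univ, and_true,
      hB, Finset.mem_filter, true_and, Finset.coe_univ, Set.mem_univ] at hK hK'
    simp only at heq
    have hv : v = v' := by simpa using congrFun heq j
    have hoff : ∀ t, t ≠ j → K t = K' t := by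
      intro t ht
      simpa [ht] using congrFun heq t
    have hle : (j.val + 1) * m ≤ m * m := Nat.mul_le_mul_right _ j.isLt
    have hpre : pre m (ext m K) ((j.val + 1) * m) = pre m (ext m K') ((j.val + 1) * m) := by
      apply pre_congr m _ hm
      intro t ht
      have htm : t < m := ht.trans j.isLt
      simp only [ext, htm, dif_pos]
      rw [hoff]
      intro h
      rw [← h] at ht
      simp at ht
    have mem : ∀ L : Fin m → Fin m, j.val * m + ext m L j ∈ alg.A (pre m (ext m L) (m * m)) →
        j.val * m + ext m L j ∈ alg.A (pre m (ext m L) ((j.val + 1) * m)) := by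
      intro L hL
      have := ext_lt m hm L j
      refine online_mono m _ alg _ (m * m - (j.val + 1) * m) _ (by rw [add_mul]; omega) ?_
      rwa [Nat.add_sub_cancel' hle]
    have h1 := mem K hK
    have h2 := mem K' hK'
    rw [← hpre] at h2
    have hdiv : ∀ L : Fin m → Fin m, (j.val * m + ext m L j) / m = j.val := by
      intro L
      rw [mul_comm, Nat.mul_add_div hm, Nat.div_eq_of_lt (ext_lt m hm L j), add_zero]
    have h3 := phase_ne m hm _ _ hle _ (alg.feasible _) h1 h2 (by rw [hdiv, hdiv])
    have h4 : K j = K' j := by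
      apply Fin.ext
      have : ext m K j = ext m K' j := by omega
      simpa [ext] using this
    have hKK : K = K' := by
      funext t
      by_cases ht : t = j
      · rw [ht, h4]
      · exact hoff t ht
    rw [hKK, hv]
  have := Finset.card_le_card_of_injOn (t := (Finset.univ : Finset (Fin m → Fin m))) _
    (fun _ _ => Finset.mem_univ _) hinj
  simpa [Finset.card_product] using this

open Classical in
lemma total (m : ℕ) (hm : 1 ≤ m) (alg : OnlineAlg (fun u : Fin (2 * m) → ℝ => u)) :
    ∑ K : Fin m → Fin m, (alg.A (pre m (ext m K) (m * m))).card ≤ 2 * m ^ m := by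
  have h1 : ∑ K : Fin m → Fin m, (alg.A (pre m (ext m K) (m * m))).card ≤
      ∑ K : Fin m → Fin m, (1 + ∑ j : Fin m,
        if j.val * m + ext m K j ∈ alg.A (pre m (ext m K) (m * m)) then 1 else 0) := by
    apply Finset.sum_le_sum
    intro K _
    refine (card_le m hm _ (ext_lt m hm K) _ (alg.feasible _)).trans ?_
    rw [Finset.card_filter, Finset.sum_range]
  rw [Finset.sum_add_distrib, Finset.sum_comm] at h1
  simp only [← Finset.card_filter] at h1
  have h2 : (∑ j : Fin m, (Finset.univ.filter (fun K : Fin m → Fin m =>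
      j.val * m + ext m K j ∈ alg.A (pre m (ext m K) (m * m)))).card) * m ≤ m ^ m * m := by
    rw [Finset.sum_mul]
    refine (Finset.sum_le_sum (fun j _ => count m hm alg j)).trans ?_
    simp [mul_comm]
  have h3 := Nat.le_of_mul_le_mul_right h2 hm
  simp at h1
  omega

end VP

theorem statement2 (m : ℕ) (hm : 1 ≤ m) :
    ∃ μ : PMF (List (Fin (2 * m) → ℝ)),
      μ.support.Finite ∧
      (∀ l ∈ μ.support, ∀ u ∈ l, ∀ i : Fin (2 * m), 0 ≤ u i ∧ u i ≤ 1) ∧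
      (∀ l ∈ μ.support, m ≤ OPT (fun u : Fin (2 * m) → ℝ => u) l) ∧
      (∀ alg : OnlineAlg (fun u : Fin (2 * m) → ℝ => u),
        ∑' l, μ l * ((alg.A l).card : ℝ≥0∞) ≤ 2) := by
  classical
  haveI : Nonempty (Fin m) := ⟨⟨0, hm⟩⟩
  let f : (Fin m → Fin m) → List (Fin (2 * m) → ℝ) := fun K => VP.pre m (VP.ext m K) (m * m)
  refine ⟨(PMF.uniformOfFintype (Fin m → Fin m)).map f, ?_, ?_, ?_, ?_⟩
  · rw [PMF.support_map]
    exact (Set.toFinite _).image _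
  · rw [PMF.support_map]
    rintro _ ⟨K, -, rfl⟩ u hu i
    simp only [f, VP.pre, List.mem_map] at hu
    obtain ⟨p, -, rfl⟩ := hu
    exact ⟨VP.item_nonneg _ _ _ _, VP.item_le_one _ hm _ _ _⟩
  · rw [PMF.support_map]
    rintro _ ⟨K, -, rfl⟩
    exact VP.opt_ge m hm _ (VP.ext_lt m hm K)
  · intro alg
    have e : ∑' l, ((PMF.uniformOfFintype (Fin m → Fin m)).map f) l * ((alg.A l).card : ℝ≥0∞)
        = ∑' K, (PMF.uniformOfFintype (Fin m → Fin m)) K * ((alg.A (f K)).card : ℝ≥0∞) := by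
      simp only [PMF.map_apply, ← ENNReal.tsum_mul_right]
      rw [ENNReal.tsum_comm]
      congr 1
      funext K
      rw [tsum_eq_single (f K)]
      · simp
      · intro l hl
        simp [hl]
    rw [e, tsum_fintype]
    simp only [PMF.uniformOfFintype_apply, ← Finset.mul_sum]
    have ht := VP.total m hm alg
    have hc : Fintype.card (Fin m → Fin m) = m ^ m := by simp
    rw [hc, mul_comm, ← div_eq_mul_inv]
    apply ENNReal.div_le_of_le_mul
    exact_mod_cast ht
end

section
/- Fix integers ℓ ≥ 1 and n ≥ 1, set ε = 1/n and d = (2ℓ)!/ℓ! + ℓ. There exists a finitely supported probability mass function μ on instances whose items have weight vectors taking values only in {0, ε} on each of the d coordinates, such that: (i) every list l in the support of μ satisfies OPT(l) ≥ ℓ·n = ℓ/ε; and (ii) for every deterministic online algorithm with free disposal A, the expectation ∑' l, μ(l) · |A(l)| ≤ 2n = 2/ε. (Since ℓ = Θ(log d / log log d) and the sparsity satisfies k ≤ d, by Yao's principle this shows that no randomized algorithm has competitive ratio o(log k / log log k), even when the maximum entry ε of all weight vectors is arbitrarily small and the utility function is f(S) = |S|.) -/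
open scoped BigOperators ENNReal

namespace Hard

variable {ℓ d : ℕ}

/-- The item of round `j` with label `a` uses dimension `i`. -/
def Hit (E : (Fin ℓ → Fin ℓ) ⊕ Fin ℓ ↪ Fin d) (σ : Fin ℓ → Fin ℓ) (j a : ℕ) (i : Fin d) : Prop :=
  (∃ τ, i = E (Sum.inl τ) ∧ (∀ k : Fin ℓ, k.val < j → τ k = σ k) ∧
    ∀ k : Fin ℓ, k.val = j → (τ k).val ≠ a) ∨ ∃ k : Fin ℓ, k.val = j ∧ i = E (Sum.inr k)

open Classical in
/-- The item at position `p`. -/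
noncomputable def item (n : ℕ) (E : (Fin ℓ → Fin ℓ) ⊕ Fin ℓ ↪ Fin d) (σ : Fin ℓ → Fin ℓ)
    (p : ℕ) (i : Fin d) : ℝ :=
  if Hit E σ (p / n / ℓ) (p / n % ℓ) i then 1 / (n : ℝ) else 0

/-- The instance with hidden leaf `σ`. -/
noncomputable def inst (n : ℕ) (E : (Fin ℓ → Fin ℓ) ⊕ Fin ℓ ↪ Fin d) (σ : Fin ℓ → Fin ℓ) :
    List (Fin d → ℝ) := (List.range (ℓ * ℓ * n)).map (item n E σ)

abbrev W (d : ℕ) : (Fin d → ℝ) → Fin d → ℝ := fun u => u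

lemma weightAt_map (f : ℕ → Fin d → ℝ) (N p : ℕ) (hp : p < N) (i : Fin d) :
    weightAt (W d) ((List.range N).map f) p i = f p i := by
  simp [weightAt, List.getElem?_range, hp]

lemma alg_append (alg : OnlineAlg (W d)) (l₁ l₂ : List (Fin d → ℝ)) :
    ∀ p ∈ alg.A (l₁ ++ l₂), p < l₁.length → p ∈ alg.A l₁ := by
  induction l₂ using List.reverseRecOn with
  | nil => intro p hp _; simpa using hp
  | append_singleton l u ih =>
    intro p hp hlt
    rw [← List.append_assoc] at hp
    have := alg.online _ _ hp
    rw [Finset.mem_union, Finset.mem_singleton] at this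
    rcases this with h | h
    · exact ih p h hlt
    · rw [List.length_append] at h; omega

lemma card_bound {n : ℕ} (hn : 1 ≤ n) (f : ℕ → Fin d → ℝ) (hf : ∀ p i, 0 ≤ f p i) (N : ℕ)
    (P S : Finset ℕ)
    (hP : Feasible (W d) ((List.range N).map f) P) (hS : S ⊆ P) (i : Fin d)
    (h : ∀ p ∈ S, f p i = 1 / (n : ℝ)) : S.card ≤ n := by
  have hlt : ∀ p ∈ P, p < N := fun p hp => by simpa using hP.1 p hp
  have h1 := hP.2 i
  rw [Finset.sum_congr rfl (fun p hp => weightAt_map f N p (hlt p hp) i)] at h1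
  have h2 : ∑ p ∈ S, f p i ≤ ∑ p ∈ P, f p i :=
    Finset.sum_le_sum_of_subset_of_nonneg hS (fun p _ _ => hf p i)
  rw [Finset.sum_congr rfl h, Finset.sum_const, nsmul_eq_mul] at h2
  have hn' : (0 : ℝ) < n := by exact_mod_cast hn
  have h3 : (S.card : ℝ) * (1 / n) ≤ 1 := h2.trans h1
  rw [mul_one_div, div_le_one hn'] at h3
  exact_mod_cast h3

lemma item_nonneg (n : ℕ) (E : (Fin ℓ → Fin ℓ) ⊕ Fin ℓ ↪ Fin d) (σ : Fin ℓ → Fin ℓ) (p : ℕ)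
    (i : Fin d) : 0 ≤ item n E σ p i := by
  unfold item; split_ifs <;> positivity

lemma rnd_lt {n p : ℕ} (hp : p < ℓ * ℓ * n) : p / n / ℓ < ℓ := by
  apply Nat.div_lt_of_lt_mul
  apply Nat.div_lt_of_lt_mul
  rwa [mul_comm]

/-- Good positions of round `j`. -/
def good (n : ℕ) (σ : Fin ℓ → Fin ℓ) (j : Fin ℓ) (P : Finset ℕ) : Finset ℕ :=
  P.filter (fun p => p / n / ℓ = j.val ∧ p / n % ℓ = (σ j).val)

lemma card_le_good {n : ℕ} (hn : 1 ≤ n) (E : (Fin ℓ → Fin ℓ) ⊕ Fin ℓ ↪ Fin d)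
    (alg : OnlineAlg (W d)) (σ : Fin ℓ → Fin ℓ) :
    (alg.A (inst n E σ)).card ≤ n + ∑ j, (good n σ j (alg.A (inst n E σ))).card := by
  classical
  set P := alg.A (inst n E σ) with hPdef
  have hP : Feasible (W d) (inst n E σ) P := alg.feasible _
  have hlt : ∀ p ∈ P, p < ℓ * ℓ * n := fun p hp => by simpa [inst] using hP.1 p hp
  set G := Finset.univ.biUnion (fun j => good n σ j P)
  have h1 : (P \ G).card ≤ n := by
    apply card_bound hn _ (item_nonneg n E σ) _ P _ hP Finset.sdiff_subset (E (Sum.inl σ))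
    intro p hp
    rw [Finset.mem_sdiff] at hp
    unfold item
    rw [if_pos]
    refine Or.inl ⟨σ, rfl, fun _ _ => rfl, ?_⟩
    intro k hk hlab
    apply hp.2
    simp only [G, Finset.mem_biUnion, good, Finset.mem_filter]
    exact ⟨k, Finset.mem_univ _, hp.1, hk.symm, hlab.symm⟩
  have h2 : G.card ≤ ∑ j, (good n σ j P).card := Finset.card_biUnion_le
  have h3 : P.card ≤ (P \ G).card + G.card := by
    have := Finset.card_le_card (show P ⊆ (P \ G) ∪ G by intro x hx; by_cases x ∈ G <;> simp_all)
    exact this.trans (Finset.card_union_le _ _)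
  omega

lemma hit_congr (E : (Fin ℓ → Fin ℓ) ⊕ Fin ℓ ↪ Fin d) (σ σ' : Fin ℓ → Fin ℓ) (j a : ℕ) (i : Fin d)
    (h : ∀ k : Fin ℓ, k.val < j → σ k = σ' k) : Hit E σ j a i ↔ Hit E σ' j a i := by
  unfold Hit
  refine or_congr (exists_congr fun τ => and_congr Iff.rfl (and_congr ?_ Iff.rfl)) Iff.rfl
  exact forall_congr' fun k => forall_congr' fun hk => by rw [h k hk]

lemma good_sum {n : ℕ} (hn : 1 ≤ n) (E : (Fin ℓ → Fin ℓ) ⊕ Fin ℓ ↪ Fin d)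
    (alg : OnlineAlg (W d)) (σ : Fin ℓ → Fin ℓ) (j : Fin ℓ) :
    ∑ a, (good n (Function.update σ j a) j (alg.A (inst n E (Function.update σ j a)))).card
      ≤ n := by
  classical
  have hℓ : 0 < ℓ := j.pos
  set M := (j.val + 1) * ℓ * n
  have hM : M ≤ ℓ * ℓ * n := by
    apply Nat.mul_le_mul_right; apply Nat.mul_le_mul_right; exact j.isLt
  set l₁ := (List.range M).map (item n E σ) with hl₁
  have hpre : ∀ a, ∃ l₂, inst n E (Function.update σ j a) = l₁ ++ l₂ := by
    intro a
    obtain ⟨r, hr⟩ := Nat.exists_eq_add_of_le hM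
    unfold inst
    rw [hr, List.range_add, List.map_append]
    refine ⟨_, congrArg₂ _ ?_ rfl⟩
    apply List.map_congr_left
    intro p hp
    have hp : p < M := by simpa using hp
    have hr : p / n / ℓ < j.val + 1 := by
      apply Nat.div_lt_of_lt_mul
      apply Nat.div_lt_of_lt_mul
      rw [mul_comm ℓ, mul_comm n]; exact hp
    funext i
    unfold item
    have := hit_congr E (Function.update σ j a) σ (p / n / ℓ) (p / n % ℓ) i (by
      intro k hk
      apply Function.update_of_ne
      intro h; subst h; omega)
    simp only [this]
  set Q := (alg.A l₁).filter (fun p => p / n / ℓ = j.val) with hQ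
  have hQn : Q.card ≤ n := by
    apply card_bound hn _ (item_nonneg n E σ) M _ Q (alg.feasible l₁) (Finset.filter_subset _ _)
      (E (Sum.inr j))
    intro p hp
    rw [hQ, Finset.mem_filter] at hp
    unfold item
    rw [if_pos]
    exact Or.inr ⟨j, hp.2.symm, rfl⟩
  refine le_trans ?_ hQn
  have hQ2 : ∑ a : Fin ℓ, (Q.filter (fun p => (⟨p / n % ℓ, Nat.mod_lt _ hℓ⟩ : Fin ℓ) = a)).card
      = Q.card := (Finset.card_eq_sum_card_fiberwise (fun _ _ => Finset.mem_univ _)).symm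
  rw [← hQ2]
  apply Finset.sum_le_sum
  intro a _
  apply Finset.card_le_card
  intro p hp
  simp only [good, Finset.mem_filter, Function.update_self] at hp
  obtain ⟨hp, h1, h2⟩ := hp
  obtain ⟨l₂, hl⟩ := hpre a
  rw [hl] at hp
  have hpM : p < M := by
    have h3 : p / n < (j.val + 1) * ℓ := by
      rw [← Nat.div_lt_iff_lt_mul hℓ]; omega
    rwa [Nat.div_lt_iff_lt_mul hn] at h3
  have := alg_append alg l₁ l₂ p hp (by simpa [hl₁] using hpM)
  simp only [hQ, Finset.mem_filter]
  exact ⟨⟨this, h1⟩, Fin.ext h2⟩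

lemma sum_update (g : (Fin ℓ → Fin ℓ) → ℕ) (j : Fin ℓ) :
    ∑ σ, ∑ a, g (Function.update σ j a) = ℓ * ∑ σ, g σ := by
  have : ℓ * ∑ σ, g σ = ∑ σ : Fin ℓ → Fin ℓ, ∑ _a : Fin ℓ, g σ := by
    simp [Finset.mul_sum]
  rw [this, ← Finset.sum_product', ← Finset.sum_product']
  refine Finset.sum_nbij' (fun x => (Function.update x.1 j x.2, x.1 j))
    (fun x => (Function.update x.1 j x.2, x.1 j)) ?_ ?_ ?_ ?_ ?_ <;> simp

lemma total {n : ℕ} (hℓ : 1 ≤ ℓ) (hn : 1 ≤ n) (E : (Fin ℓ → Fin ℓ) ⊕ Fin ℓ ↪ Fin d)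
    (alg : OnlineAlg (W d)) :
    ∑ σ, (alg.A (inst n E σ)).card ≤ 2 * n * ℓ ^ ℓ := by
  have h1 : ∀ j : Fin ℓ, ℓ * ∑ σ, (good n σ j (alg.A (inst n E σ))).card ≤ ℓ ^ ℓ * n := by
    intro j
    rw [← sum_update (fun σ => (good n σ j (alg.A (inst n E σ))).card) j]
    calc _ ≤ ∑ σ : Fin ℓ → Fin ℓ, n := Finset.sum_le_sum fun σ _ => good_sum hn E alg σ j
      _ = _ := by simp
  have h2 : ∑ σ, (alg.A (inst n E σ)).card ≤
      ℓ ^ ℓ * n + ∑ j, ∑ σ, (good n σ j (alg.A (inst n E σ))).card := by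
    calc _ ≤ ∑ σ : Fin ℓ → Fin ℓ, (n + ∑ j, (good n σ j (alg.A (inst n E σ))).card) :=
          Finset.sum_le_sum fun σ _ => card_le_good hn E alg σ
      _ = _ := by rw [Finset.sum_add_distrib, Finset.sum_comm]; simp
  have h3 : ℓ * ∑ j, ∑ σ, (good n σ j (alg.A (inst n E σ))).card ≤ ℓ * (ℓ ^ ℓ * n) := by
    rw [Finset.mul_sum]
    calc _ ≤ ∑ _j : Fin ℓ, ℓ ^ ℓ * n := Finset.sum_le_sum fun j _ => h1 j
      _ = _ := by simp
  have h4 := Nat.le_of_mul_le_mul_left h3 hℓ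
  calc _ ≤ _ := h2
    _ ≤ ℓ ^ ℓ * n + ℓ ^ ℓ * n := by omega
    _ = _ := by ring

lemma opt_ge {n : ℕ} (hn : 1 ≤ n) (E : (Fin ℓ → Fin ℓ) ⊕ Fin ℓ ↪ Fin d)
    (σ : Fin ℓ → Fin ℓ) : ℓ * n ≤ OPT (W d) (inst n E σ) := by
  classical
  have hn' : (n : ℝ) ≠ 0 := by positivity
  let f : Fin ℓ × Fin n → ℕ := fun x => (x.1.val * ℓ + (σ x.1).val) * n + x.2.val
  have hdiv : ∀ x, f x / n = x.1.val * ℓ + (σ x.1).val := by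
    intro x
    simp only [f]
    rw [mul_comm, Nat.mul_add_div hn, Nat.div_eq_of_lt x.2.isLt, add_zero]
  have hr : ∀ x, f x / n / ℓ = x.1.val := by
    intro x
    rw [hdiv, mul_comm, Nat.mul_add_div x.1.pos, Nat.div_eq_of_lt (σ x.1).isLt, add_zero]
  have hlab : ∀ x, f x / n % ℓ = (σ x.1).val := by
    intro x
    rw [hdiv, mul_comm, Nat.mul_add_mod, Nat.mod_eq_of_lt (σ x.1).isLt]
  have hm : ∀ x, f x % n = x.2.val := by
    intro x
    simp only [f]
    rw [mul_comm, Nat.mul_add_mod, Nat.mod_eq_of_lt x.2.isLt]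
  have hinj : Function.Injective f := by
    intro x y h
    refine Prod.ext (Fin.ext ?_) (Fin.ext ?_)
    · rw [← hr, ← hr, h]
    · rw [← hm, ← hm, h]
  have hlt : ∀ x, f x < ℓ * ℓ * n := by
    intro x
    rw [← Nat.div_lt_iff_lt_mul hn, ← Nat.div_lt_iff_lt_mul x.1.pos, hr]
    exact x.1.isLt
  apply le_csSup
  · refine ⟨ℓ * ℓ * n, ?_⟩
    rintro m ⟨P, hP, rfl⟩
    have : P ⊆ Finset.range (ℓ * ℓ * n) := fun p hp => by simpa [inst] using hP.1 p hp
    simpa using Finset.card_le_card this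
  · refine ⟨Finset.univ.image f, ⟨?_, ?_⟩, ?_⟩
    · intro p hp
      obtain ⟨x, -, rfl⟩ := Finset.mem_image.1 hp
      simpa [inst] using hlt x
    · intro i
      rw [Finset.sum_image (fun x _ y _ h => hinj h)]
      have h1 : ∀ x, weightAt (W d) (inst n E σ) (f x) i =
          if Hit E σ x.1.val (σ x.1).val i then 1 / (n : ℝ) else 0 := by
        intro x
        unfold inst
        rw [weightAt_map _ _ _ (hlt x)]
        unfold item
        rw [hr, hlab]
      rw [Finset.sum_congr rfl (fun x _ => h1 x), Fintype.sum_prod_type]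
      have h2 : ∀ j : Fin ℓ, (∑ _c : Fin n, if Hit E σ j.val (σ j).val i then 1 / (n : ℝ) else 0)
          = if Hit E σ j.val (σ j).val i then 1 else 0 := by
        intro j
        split_ifs <;> simp [hn']
      simp only [h2]
      rw [Finset.sum_boole]
      have h3 : (Finset.univ.filter (fun j : Fin ℓ => Hit E σ j.val (σ j).val i)).card ≤ 1 := by
        rw [Finset.card_le_one]
        intro j hj k hk
        simp only [Finset.mem_filter, Finset.mem_univ, true_and] at hj hk
        rcases hj with ⟨τ, hi, hj1, hj2⟩ | ⟨j', hj', hi⟩ <;>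
          rcases hk with ⟨τ', hi', hk1, hk2⟩ | ⟨k', hk', hi'⟩
        · have := Sum.inl_injective (E.injective (hi.symm.trans hi'))
          subst this
          rcases lt_trichotomy j k with h | h | h
          · exact absurd (congrArg Fin.val (hk1 j h)) (hj2 j rfl)
          · exact h
          · exact absurd (congrArg Fin.val (hj1 k h)) (hk2 k rfl)
        · exact absurd (E.injective (hi.symm.trans hi')) (by simp)
        · exact absurd (E.injective (hi.symm.trans hi')) (by simp)
        · have := Sum.inr_injective (E.injective (hi.symm.trans hi'))
          subst this
          exact Fin.ext (hj'.symm.trans hk')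
      exact_mod_cast h3
    · rw [Finset.card_image_of_injective _ hinj]; simp

lemma dim_le (ℓ : ℕ) : ℓ ^ ℓ ≤ Nat.factorial (2 * ℓ) / Nat.factorial ℓ := by
  rw [two_mul, ← Nat.ascFactorial_eq_div]
  exact (Nat.pow_le_pow_left (Nat.le_succ ℓ) ℓ).trans (Nat.pow_succ_le_ascFactorial (ℓ + 1) ℓ)

lemma tsum_map {α β : Type*} (p : PMF α) (L : α → β) (f : β → ℝ≥0∞) :
    ∑' l, (p.map L) l * f l = ∑' a, p a * f (L a) := by
  classical
  simp only [PMF.map_apply, ← ENNReal.tsum_mul_right]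
  rw [ENNReal.tsum_comm]
  congr 1; funext a
  rw [tsum_eq_single (L a)]
  · simp
  · intro b hb; simp [hb]

end Hard

/-- Hardness under the small weight assumption: with `ε = 1/n` and
`d = (2ℓ)!/ℓ! + ℓ` dimensions there is a finitely supported distribution over
instances, all weights lying in `{0, ε}`, whose offline optimum is always at least
`ℓ·n = ℓ/ε`, while every deterministic online algorithm with free disposal keeps at most
`2n = 2/ε` items in expectation. Items are identified with their weight vectors. -/
theorem statement3 (ℓ n : ℕ) (hℓ : 1 ≤ ℓ) (hn : 1 ≤ n) :
    ∃ μ : PMF (List (Fin (Nat.factorial (2 * ℓ) / Nat.factorial ℓ + ℓ) → ℝ)),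
      μ.support.Finite ∧
      (∀ l ∈ μ.support, ∀ u ∈ l,
        ∀ i : Fin (Nat.factorial (2 * ℓ) / Nat.factorial ℓ + ℓ),
          u i = 0 ∨ u i = 1 / (n : ℝ)) ∧
      (∀ l ∈ μ.support,
        ℓ * n ≤ OPT (fun u : Fin (Nat.factorial (2 * ℓ) / Nat.factorial ℓ + ℓ) → ℝ => u) l) ∧
      (∀ alg : OnlineAlg
          (fun u : Fin (Nat.factorial (2 * ℓ) / Nat.factorial ℓ + ℓ) → ℝ => u),
        ∑' l, μ l * ((alg.A l).card : ℝ≥0∞) ≤ 2 * n) := by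
  classical
  have hcard : Fintype.card ((Fin ℓ → Fin ℓ) ⊕ Fin ℓ) ≤
      Fintype.card (Fin (Nat.factorial (2 * ℓ) / Nat.factorial ℓ + ℓ)) := by
    simpa using Hard.dim_le ℓ
  obtain ⟨E⟩ := Function.Embedding.nonempty_of_card_le hcard
  haveI : Nonempty (Fin ℓ → Fin ℓ) := ⟨id⟩
  have hsup : ∀ l ∈ ((PMF.uniformOfFintype (Fin ℓ → Fin ℓ)).map (Hard.inst n E)).support,
      ∃ σ, Hard.inst n E σ = l := by
    intro l hl
    rw [PMF.mem_support_map_iff] at hl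
    obtain ⟨σ, -, h⟩ := hl
    exact ⟨σ, h⟩
  refine ⟨(PMF.uniformOfFintype (Fin ℓ → Fin ℓ)).map (Hard.inst n E), ?_, ?_, ?_, ?_⟩
  · exact (Set.finite_range (Hard.inst n E)).subset hsup
  · intro l hl u hu i
    obtain ⟨σ, rfl⟩ := hsup l hl
    simp only [Hard.inst, List.mem_map] at hu
    obtain ⟨p, -, rfl⟩ := hu
    unfold Hard.item
    split_ifs
    · exact Or.inr rfl
    · exact Or.inl rfl
  · intro l hl
    obtain ⟨σ, rfl⟩ := hsup l hl
    exact Hard.opt_ge hn E σ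
  · intro alg
    rw [Hard.tsum_map, tsum_fintype]
    simp only [PMF.uniformOfFintype_apply]
    rw [← Finset.mul_sum]
    have h := Hard.total hℓ hn E alg
    have hc : (Fintype.card (Fin ℓ → Fin ℓ) : ℝ≥0∞) = ((ℓ ^ ℓ : ℕ) : ℝ≥0∞) := by simp
    rw [hc, ← Nat.cast_sum]
    have h0 : ((ℓ ^ ℓ : ℕ) : ℝ≥0∞) ≠ 0 := by
      rw [Nat.cast_ne_zero]; positivity
    calc _ ≤ ((ℓ ^ ℓ : ℕ) : ℝ≥0∞)⁻¹ * ((2 * n * ℓ ^ ℓ : ℕ) : ℝ≥0∞) := by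
          gcongr
      _ = ((ℓ ^ ℓ : ℕ) : ℝ≥0∞)⁻¹ * ((ℓ ^ ℓ : ℕ) : ℝ≥0∞) * (2 * n) := by
          rw [Nat.cast_mul (2 * n)]; push_cast; ring
      _ = 2 * n := by
          rw [ENNReal.inv_mul_cancel h0 (ENNReal.natCast_ne_top _), one_mul]
end

section
/- Fix an integer n ≥ 2, set ε = 1/(2n) (so 0 < ε ≤ 1/4), and fix the dimension d = k ≥ 1. Consider items that are pairs (v, w) of a nonnegative real value v and a weight vector w : Fin d → ℝ with entries in [0, 1 − ε]. For a deterministic online algorithm with free disposal A, let ALG(l) = ∑_{p ∈ A(l)} v_{l_p} and let OPT(l) be the maximum of ∑_{p ∈ P} v_{l_p} over all feasible sets P of positions of l. Then for every such algorithm A there exists an instance l (all of whose items have weight vectors with entries in [0, 1 − ε]) such that OPT(l) ≥ 1 and 2 · OPT(l) ≥ √(k/ε) · ALG(l). (Hence every deterministic algorithm has competitive ratio Ω(√(k/ε)) for the online vector packing problem with weight vectors in [0, 1−ε]^d, even when the utility function is linear and d = k.) -/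
open scoped BigOperators

/-- Items for the valued problem in dimension `k` with slack `ε`: a pair of a
nonnegative value and a weight vector with entries in `[0, 1 - ε]`. -/
def Item4 (k : ℕ) (ε : ℝ) :=
  {p : ℝ × (Fin k → ℝ) // 0 ≤ p.1 ∧ ∀ i : Fin k, 0 ≤ p.2 i ∧ p.2 i ≤ 1 - ε}

/-- The weight vector of a valued item. -/
def W4 (k : ℕ) (ε : ℝ) (u : Item4 k ε) : Fin k → ℝ := u.val.2

/-- The value of the item at position `p` of `l` (zero if out of range). -/
noncomputable def valAt (k : ℕ) (ε : ℝ) (l : List (Item4 k ε)) (p : ℕ) : ℝ :=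
  (l[p]?.map fun u => u.val.1).getD 0

/-- The optimal total value over all feasible sets of positions of `l`. -/
noncomputable def OPTval (k : ℕ) (ε : ℝ) (l : List (Item4 k ε)) : ℝ :=
  sSup {x : ℝ | ∃ P : Finset ℕ, Feasible (W4 k ε) l P ∧ ∑ p ∈ P, valAt k ε l p = x}


/-- Values are nonnegative. -/
lemma valAt_nonneg4 (k : ℕ) (ε : ℝ) (l : List (Item4 k ε)) (p : ℕ) : 0 ≤ valAt k ε l p := by
  unfold valAt
  cases h : l[p]? with
  | none => simp
  | some u => simpa using u.2.1

/-- Every feasible set gives a lower bound on the optimum. -/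
lemma le_OPTval4 (k : ℕ) (ε : ℝ) (l : List (Item4 k ε)) (P : Finset ℕ)
    (hP : Feasible (W4 k ε) l P) : ∑ p ∈ P, valAt k ε l p ≤ OPTval k ε l := by
  refine le_csSup ⟨∑ p ∈ Finset.range l.length, valAt k ε l p, ?_⟩ ⟨P, hP, rfl⟩
  rintro x ⟨Q, hQ, rfl⟩
  refine Finset.sum_le_sum_of_subset_of_nonneg ?_ (fun p _ _ => valAt_nonneg4 k ε l p)
  intro p hp
  exact Finset.mem_range.2 (hQ.1 p hp)

/-- Weight of the item number `p`. -/
noncomputable def hardW (n k : ℕ) (ε : ℝ) : ℕ → Fin k → ℝ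
  | 0 => fun _ => 1 - ε
  | t + 1 => fun i => if t % k = i then 1 / (n : ℝ) else 0

/-- Value of the item number `p`. -/
noncomputable def hardV (v : ℝ) : ℕ → ℝ
  | 0 => 1
  | _ + 1 => v

/-- Counting residues. -/
lemma sum_mod4 (k : ℕ) (c : ℝ) (i : Fin k) (n : ℕ) :
    ∑ t ∈ Finset.range (n * k), (if t % k = i then c else 0) = n * c := by
  induction n with
  | zero => simp
  | succ n ih =>
    rw [Nat.succ_mul, Finset.sum_range_add, ih]
    have : ∑ x ∈ Finset.range k, (if (n * k + x) % k = i then c else 0) = c := by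
      rw [Finset.sum_eq_single (i : ℕ)]
      · rw [Nat.mul_add_mod_self_right, Nat.mod_eq_of_lt i.2, if_pos rfl]
      · intro b hb hne
        rw [Nat.mul_add_mod_self_right, Nat.mod_eq_of_lt (Finset.mem_range.1 hb), if_neg hne]
      · intro h
        exact absurd (Finset.mem_range.2 i.2) h
    rw [this]; push_cast; ring

/-- Hardness for deterministic algorithms (generalizing Iwama–Zhang): with `ε = 1/(2n)`
and `d = k` dimensions, every deterministic online algorithm with free disposal has an
instance with weights in `[0, 1-ε]^k` on which `OPT ≥ 1` and
`2·OPT ≥ √(k/ε)·ALG`, i.e. the competitive ratio is `Ω(√(k/ε))`. -/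
theorem statement4 (n : ℕ) (hn : 2 ≤ n) (k : ℕ) (hk : 1 ≤ k)
    (alg : OnlineAlg (W4 k (1 / (2 * n)))) :
    ∃ l : List (Item4 k (1 / (2 * n))),
      1 ≤ OPTval k (1 / (2 * n)) l ∧
      Real.sqrt ((k : ℝ) / (1 / (2 * n))) *
          (∑ p ∈ alg.A l, valAt k (1 / (2 * n)) l p) ≤
        2 * OPTval k (1 / (2 * n)) l := by
  have hnR : (2 : ℝ) ≤ n := by exact_mod_cast hn
  have hkR : (1 : ℝ) ≤ k := by exact_mod_cast hk
  have hn0 : (0 : ℝ) < n := by linarith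
  generalize hε : (1 / (2 * n) : ℝ) = ε at alg ⊢
  have hεn : 1 / (n : ℝ) = 2 * ε := by rw [← hε]; field_simp
  have hε0 : 0 < ε := by rw [← hε]; positivity
  have hε4 : ε ≤ 1 / 4 := by
    rw [← hε]
    exact one_div_le_one_div_of_le (by norm_num) (by linarith)
  have hRR : (k : ℝ) / ε = 2 * n * k := by rw [← hε]; field_simp
  rw [hRR]
  set R := Real.sqrt (2 * n * k) with hR
  have hR0 : 0 < R := Real.sqrt_pos.2 (by positivity)
  have hRsq : R * R = 2 * n * k := Real.mul_self_sqrt (by positivity)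
  set v : ℝ := 2 / R with hv
  have hv0 : 0 ≤ v := by positivity
  have hRv : R * v = 2 := by rw [hv]; field_simp
  have hok : ∀ p, 0 ≤ hardV v p ∧ ∀ i : Fin k, 0 ≤ hardW n k ε p i ∧ hardW n k ε p i ≤ 1 - ε := by
    intro p
    cases p with
    | zero => exact ⟨zero_le_one, fun i => ⟨by simp only [hardW]; linarith, le_refl _⟩⟩
    | succ t =>
      refine ⟨hv0, fun i => ?_⟩
      simp only [hardW, hεn]
      split_ifs <;> constructor <;> linarith
  let f : ℕ → Item4 k ε := fun p => ⟨(hardV v p, hardW n k ε p), hok p⟩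
  let L : ℕ → List (Item4 k ε) := fun j => (List.range (j + 1)).map f
  have hlen : ∀ j, (L j).length = j + 1 := fun j => by simp [L]
  have hsucc : ∀ j, L (j + 1) = L j ++ [f (j + 1)] := fun j => by
    simp only [L]
    rw [List.range_succ, List.map_append]; rfl
  have hget : ∀ j p, p < j + 1 → (L j)[p]? = some (f p) := by
    intro j p hp
    change (List.map f (List.range (j + 1)))[p]? = _
    rw [List.getElem?_map, List.getElem?_range hp]
    rfl
  have hval : ∀ j p, p < j + 1 → valAt k ε (L j) p = hardV v p := by
    intro j p hp
    unfold valAt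
    rw [hget j p hp]
    rfl
  have hwt : ∀ j p i, p < j + 1 → weightAt (W4 k ε) (L j) p i = hardW n k ε p i := by
    intro j p i hp
    unfold weightAt
    rw [hget j p hp]
    rfl
  have hlt : ∀ j, ∀ p ∈ alg.A (L j), p < j + 1 := fun j p hp => by
    have := (alg.feasible (L j)).1 p hp
    rwa [hlen] at this
  have hopt : ∀ j, 1 ≤ OPTval k ε (L j) := by
    intro j
    have h := le_OPTval4 k ε (L j) {0} ⟨by simp [hlen], fun i => by
      rw [Finset.sum_singleton, hwt j 0 i (by omega)]
      simp only [hardW]; linarith⟩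
    rw [Finset.sum_singleton, hval j 0 (by omega)] at h
    exact h
  have honly : ∀ j, 0 ∈ alg.A (L j) → alg.A (L j) = {0} := by
    intro j h0
    refine Finset.eq_singleton_iff_unique_mem.2 ⟨h0, fun p hp => ?_⟩
    by_contra hne
    obtain ⟨t, rfl⟩ := Nat.exists_eq_succ_of_ne_zero hne
    let i : Fin k := ⟨t % k, Nat.mod_lt _ (by omega)⟩
    have h1 := (alg.feasible (L j)).2 i
    have h2 : ∑ p ∈ ({0, t + 1} : Finset ℕ), weightAt (W4 k ε) (L j) p i
        ≤ ∑ p ∈ alg.A (L j), weightAt (W4 k ε) (L j) p i := by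
      refine Finset.sum_le_sum_of_subset_of_nonneg ?_ ?_
      · intro q hq
        simp only [Finset.mem_insert, Finset.mem_singleton] at hq
        rcases hq with rfl | rfl
        · exact h0
        · exact hp
      · intro q hq _
        rw [hwt j q i (hlt j q hq)]
        exact ((hok q).2 i).1
    rw [Finset.sum_pair (by omega), hwt j 0 i (by omega), hwt j (t + 1) i (hlt j _ hp)] at h2
    simp only [hardW, i, if_true, hεn] at h2
    linarith
  by_cases hex : ∃ j, 0 ∉ alg.A (L j)
  · classical
    let j := Nat.find hex
    have hj : 0 ∉ alg.A (L j) := Nat.find_spec hex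
    refine ⟨L j, hopt j, ?_⟩
    have hsub : alg.A (L j) ⊆ {j} := by
      rcases hj' : j with _ | t
      · intro p hp
        have := hlt 0 p hp
        simp; omega
      · have h0 : 0 ∈ alg.A (L t) := by
          by_contra hc
          exact Nat.find_min hex (show t < Nat.find hex by change t < j; omega) hc
        intro p hp
        rw [hj'] at hj
        have hp0 : p ≠ 0 := by rintro rfl; exact hj hp
        rw [hsucc] at hp
        have := alg.online _ _ hp
        rw [honly t h0, hlen] at this
        simp only [Finset.mem_union, Finset.mem_singleton] at this ⊢
        omega
    have hle : ∑ p ∈ alg.A (L j), valAt k ε (L j) p ≤ v := by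
      rcases Finset.subset_singleton_iff.1 hsub with h | h
      · rw [h]; simpa using hv0
      · rw [h, Finset.sum_singleton, hval j j (by omega)]
        have : j ≠ 0 := by
          intro hc
          apply hj
          rw [h, hc]; simp
        obtain ⟨t, ht⟩ := Nat.exists_eq_succ_of_ne_zero this
        rw [ht]
        exact le_refl v
    have h1 := mul_le_mul_of_nonneg_left hle hR0.le
    have h2 := hopt j
    linarith
  · push Not at hex
    refine ⟨L (n * k), hopt _, ?_⟩
    rw [honly _ (hex _), Finset.sum_singleton, hval _ 0 (by omega)]
    have h := le_OPTval4 k ε (L (n * k)) ((Finset.range (n * k)).map ⟨Nat.succ, Nat.succ_injective⟩)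
      ⟨by simp [hlen], fun i => by
        rw [Finset.sum_map]
        have : ∀ t ∈ Finset.range (n * k),
            weightAt (W4 k ε) (L (n * k)) (t + 1) i = if t % k = i then 1 / (n : ℝ) else 0 := by
          intro t ht
          rw [hwt _ _ i (by have := Finset.mem_range.1 ht; omega)]
          rfl
        refine (Finset.sum_congr rfl this).trans_le ?_
        rw [sum_mod4]
        exact le_of_eq (by field_simp)⟩
    rw [Finset.sum_map] at h
    have h3 : ∑ t ∈ Finset.range (n * k), valAt k ε (L (n * k)) (t + 1) = n * k * v := by
      rw [Finset.sum_congr rfl (g := fun _ => v)]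
      · simp
      · intro t ht
        rw [hval _ _ (by have := Finset.mem_range.1 ht; omega)]
        rfl
    have h4 : (n : ℝ) * k * v = R := by
      rw [hv]; field_simp; linarith
    have h5 : R ≤ OPTval k ε (L (n * k)) := by
      rw [← h4, ← h3]; exact h
    simp only [hardV]
    linarith
end

section
/- For every subset S ⊆ B_n of the final accepted set, f(S) ≥ f(∅) + ∑_{i : u_i ∈ S} v_i, where the sum is over those indices i ∈ {0, …, n−1} with u_i ∈ S. -/
open scoped BigOperators

/-- If `f` is submodular, items `u 0, …, u (n-1)` arrive in order, `B i` is the set of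
items ever accepted before the arrival of `u i` (so `B (i+1)` is either `B i` or
`B i ∪ {u i}` with `u i ∉ B i`), and `v i = f(B i ∪ {u i}) − f(B i)` is the marginal
value of `u i` upon arrival, then for every subset `S` of the final accepted set `B n`,
`f S ≥ f ∅ + ∑_{i : u i ∈ S} v i`. -/
theorem statement5 {U : Type*} [DecidableEq U] (f : Finset U → ℝ)
    (hsub : ∀ X Y : Finset U, f (X ∪ Y) + f (X ∩ Y) ≤ f X + f Y)
    (n : ℕ) (u : Fin n → U) (hinj : Function.Injective u)
    (B : Fin (n + 1) → Finset U) (hB0 : B 0 = ∅)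
    (hstep : ∀ i : Fin n, B i.succ = B i.castSucc ∨
      B i.succ = insert (u i) (B i.castSucc))
    (hnot : ∀ i : Fin n, u i ∉ B i.castSucc)
    (S : Finset U) (hS : S ⊆ B (Fin.last n)) :
    f ∅ + ∑ i ∈ Finset.univ.filter (fun i : Fin n => u i ∈ S),
        (f (insert (u i) (B i.castSucc)) - f (B i.castSucc)) ≤ f S := by
  induction n generalizing S with
  | zero =>
    have h0 : B (Fin.last 0) = ∅ := hB0
    rw [h0, Finset.subset_empty] at hS
    subst hS
    simp
  | succ n ih =>
    have key := fun T hT => ih (fun i => u i.castSucc)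
      (fun a b h => Fin.castSucc_injective n (hinj h))
      (fun i => B i.castSucc) hB0 (fun i => hstep i.castSucc) (fun i => hnot i.castSucc) T hT
    have hl := hstep (Fin.last n)
    have hn := hnot (Fin.last n)
    rw [Fin.succ_last] at hl
    have hS' : S ⊆ insert (u (Fin.last n)) (B (Fin.last n).castSucc) := by
      rcases hl with hl | hl
      · rw [hl] at hS
        exact hS.trans (Finset.subset_insert _ _)
      · rw [hl] at hS
        exact hS
    have hT : S.erase (u (Fin.last n)) ⊆ B (Fin.last n).castSucc :=
      Finset.subset_insert_iff.mp hS'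
    have k := key _ hT
    have hmem : ∀ i : Fin n, u i.castSucc ∈ S.erase (u (Fin.last n)) ↔ u i.castSucc ∈ S := by
      intro i
      rw [Finset.mem_erase]
      exact ⟨fun h => h.2, fun h => ⟨fun e => (Fin.castSucc_lt_last i).ne (hinj e), h⟩⟩
    simp only [hmem] at k
    rw [Finset.sum_filter] at k ⊢
    rw [Fin.sum_univ_castSucc]
    by_cases hu : u (Fin.last n) ∈ S
    · rw [if_pos hu]
      have h := hsub S (B (Fin.last n).castSucc)
      have h1 : S ∪ B (Fin.last n).castSucc
          = insert (u (Fin.last n)) (B (Fin.last n).castSucc) := by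
        ext x
        have := @hS' x
        simp only [Finset.mem_union, Finset.mem_insert] at *
        grind
      have h2 : S ∩ B (Fin.last n).castSucc = S.erase (u (Fin.last n)) := by
        ext x
        have := @hS' x
        simp only [Finset.mem_inter, Finset.mem_insert, Finset.mem_erase] at *
        grind
      rw [h1, h2] at h
      linarith
    · rw [if_neg hu]
      rw [Finset.erase_eq_of_notMem hu] at k
      linarith
end

section
/- Assume in addition that f is monotone, i.e., f(X) ≤ f(Y) whenever X ⊆ Y. Then for every subset S ⊆ {u_0, …, u_{n−1}} of the arrived items, f(S) ≤ f(∅) + ∑_{i : u_i ∈ B_n} v_i + ∑_{i : u_i ∈ S ∖ B_n} v_i. -/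
open scoped BigOperators

/-- If `f` is submodular and monotone, items `u 0, …, u (n-1)` arrive in order, `B i` is
the set of items ever accepted before the arrival of `u i` (so `B (i+1)` is either `B i`
or `B i ∪ {u i}` with `u i ∉ B i`), and `v i = f(B i ∪ {u i}) − f(B i)` is the marginal
value of `u i` upon arrival, then for every subset `S` of the arrived items,
`f S ≤ f ∅ + ∑_{i : u i ∈ B n} v i + ∑_{i : u i ∈ S ∖ B n} v i`. -/
theorem statement6 {U : Type*} [DecidableEq U] (f : Finset U → ℝ)
    (hsub : ∀ X Y : Finset U, f (X ∪ Y) + f (X ∩ Y) ≤ f X + f Y)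
    (hmono : ∀ X Y : Finset U, X ⊆ Y → f X ≤ f Y)
    (n : ℕ) (u : Fin n → U) (hinj : Function.Injective u)
    (B : Fin (n + 1) → Finset U) (hB0 : B 0 = ∅)
    (hstep : ∀ i : Fin n, B i.succ = B i.castSucc ∨
      B i.succ = insert (u i) (B i.castSucc))
    (hnot : ∀ i : Fin n, u i ∉ B i.castSucc)
    (S : Finset U) (hS : S ⊆ Finset.univ.image u) :
    f S ≤ f ∅ +
      ∑ i ∈ Finset.univ.filter (fun i : Fin n => u i ∈ B (Fin.last n)),
        (f (insert (u i) (B i.castSucc)) - f (B i.castSucc)) +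
      ∑ i ∈ Finset.univ.filter (fun i : Fin n => u i ∈ S \ B (Fin.last n)),
        (f (insert (u i) (B i.castSucc)) - f (B i.castSucc)) := by
  have hmonoB : Monotone B := by
    refine Fin.monotone_iff_le_succ.2 fun i => ?_
    rcases hstep i with h | h
    · exact h.ge
    · rw [h]; exact Finset.subset_insert _ _
  have hBn : ∀ i, B i ⊆ B (Fin.last n) := fun i => hmonoB (Fin.le_last i)
  have h1 : f (B (Fin.last n)) ≤ f ∅ +
      ∑ i ∈ Finset.univ.filter (fun i : Fin n => u i ∈ B (Fin.last n)),
        (f (insert (u i) (B i.castSucc)) - f (B i.castSucc)) := by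
    have ha := Fin.sum_univ_castSucc (fun i => f (B i))
    have hb := Fin.sum_univ_succ (fun i => f (B i))
    have hc : ∑ i : Fin n, (f (B i.succ) - f (B i.castSucc)) ≤
        ∑ i ∈ Finset.univ.filter (fun i : Fin n => u i ∈ B (Fin.last n)),
        (f (insert (u i) (B i.castSucc)) - f (B i.castSucc)) := by
      rw [Finset.sum_filter]
      refine Finset.sum_le_sum fun i _ => ?_
      have hv := hmono _ _ (Finset.subset_insert (u i) (B i.castSucc))
      rcases hstep i with h | h
      · rw [h]; split_ifs <;> linarith
      · have hm : u i ∈ B (Fin.last n) :=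
          hBn i.succ (by rw [h]; exact Finset.mem_insert_self _ _)
        rw [if_pos hm, h]
    rw [Finset.sum_sub_distrib] at hc
    rw [← hB0]
    linarith
  have h2 : ∀ T : Finset (Fin n), f (B (Fin.last n) ∪ T.image u) ≤ f (B (Fin.last n)) +
      ∑ i ∈ T, (f (insert (u i) (B i.castSucc)) - f (B i.castSucc)) := by
    intro T
    induction T using Finset.induction_on with
    | empty => simp
    | insert i T hi ih =>
      rw [Finset.sum_insert hi]
      have hs := hsub (B (Fin.last n) ∪ T.image u) (insert (u i) (B i.castSucc))
      have hu : f (B (Fin.last n) ∪ (insert i T).image u) ≤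
          f ((B (Fin.last n) ∪ T.image u) ∪ insert (u i) (B i.castSucc)) := by
        apply hmono
        rw [Finset.image_insert]
        intro x hx
        simp only [Finset.mem_union, Finset.mem_insert] at hx ⊢
        tauto
      have hl : f (B i.castSucc) ≤
          f ((B (Fin.last n) ∪ T.image u) ∩ insert (u i) (B i.castSucc)) := by
        apply hmono
        intro x hx
        have := hBn _ hx
        simp only [Finset.mem_inter, Finset.mem_union, Finset.mem_insert]
        tauto
      linarith
  have h3 := h2 (Finset.univ.filter (fun i : Fin n => u i ∈ S \ B (Fin.last n)))
  have h4 : f S ≤ f (B (Fin.last n) ∪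
      (Finset.univ.filter (fun i : Fin n => u i ∈ S \ B (Fin.last n))).image u) := by
    apply hmono
    intro x hx
    obtain ⟨i, -, rfl⟩ := Finset.mem_image.1 (hS hx)
    by_cases hb : u i ∈ B (Fin.last n)
    · exact Finset.mem_union_left _ hb
    · refine Finset.mem_union_right _ (Finset.mem_image_of_mem u ?_)
      simp [hx, hb]
  linarith
end

section
/- For all natural numbers m, s, r, the binomial coefficients satisfy m^r · C(m − s, r) ≤ (m − s)^r · C(m, r), where m − s denotes truncated subtraction in ℕ and C(·,·) is the binomial coefficient. (Equivalently, when C(m, r) > 0 and s ≤ m, the probability that a uniformly random r-element subset of an m-element set avoids a fixed s-element subset is C(m−s, r)/C(m, r) ≤ ((m−s)/m)^r = (1 − s/m)^r.) -/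
theorem choose_aux (m n : ℕ) (h : n ≤ m) (r : ℕ) :
    m ^ r * Nat.choose n r ≤ n ^ r * Nat.choose m r := by
  induction r with
  | zero => simp
  | succ r ih =>
    have h1 : m * (n - r) ≤ n * (m - r) := by
      rw [Nat.mul_sub, Nat.mul_sub, Nat.mul_comm n m]
      exact Nat.sub_le_sub_left (Nat.mul_le_mul_right r h) _
    refine Nat.le_of_mul_le_mul_right ?_ (Nat.succ_pos r)
    calc m ^ (r + 1) * Nat.choose n (r + 1) * (r + 1)
        = m ^ (r + 1) * (Nat.choose n (r + 1) * (r + 1)) := by ring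
      _ = (m ^ r * Nat.choose n r) * (m * (n - r)) := by
          rw [Nat.choose_succ_right_eq]; ring
      _ ≤ (n ^ r * Nat.choose m r) * (n * (m - r)) := Nat.mul_le_mul ih h1
      _ = n ^ (r + 1) * (Nat.choose m (r + 1) * (r + 1)) := by
          rw [Nat.choose_succ_right_eq]; ring
      _ = n ^ (r + 1) * Nat.choose m (r + 1) * (r + 1) := by ring

/-- For all naturals `m, s, r`: `m^r · C(m − s, r) ≤ (m − s)^r · C(m, r)`
(with truncated subtraction). Equivalently, a uniformly random `r`-subset of an
`m`-set avoids a fixed `s`-subset with probability at most `(1 − s/m)^r`. -/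
theorem statement8 (m s r : ℕ) :
    m ^ r * Nat.choose (m - s) r ≤ (m - s) ^ r * Nat.choose m r :=  by
  exact choose_aux m (m - s) (Nat.sub_le m s) r
end

section
/- Let a ≥ 1 be an integer and set ℓ = 2^a and r = 100 · ℓ · a. Then for every natural number m with m ≤ 4 · r · ℓ, we have ℓ^7 · C(m − r, r) ≤ C(m, r), where m − r denotes truncated subtraction in ℕ and C(·,·) is the binomial coefficient. (Equivalently: if a uniformly random r-element subset is drawn from a ground set of size m ≤ 4rℓ, the probability that it is disjoint from a fixed r-element subset of the ground set is at most ℓ^{−7}. This is the per-pair estimate behind the lemma that, in the randomized hard instance with sparsity k = r + 1 = 100ℓ log₂ℓ + 1, the probability that some two bad items are non-conflicting is at most 1/ℓ².) -/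
lemma aux_desc (L q r m : ℕ) (hL : L = q + 1) (hm : m ≤ r * L) (k : ℕ) :
    L ^ k * (m - r).descFactorial k ≤ q ^ k * m.descFactorial k := by
  induction k with
  | zero => simp
  | succ k ih =>
    rw [Nat.descFactorial_succ, Nat.descFactorial_succ]
    have h : L * (m - r - k) ≤ q * (m - k) := by
      rcases le_total m (r + k) with h | h
      · have : m - r - k = 0 := by omega
        simp [this]
      · obtain ⟨t, rfl⟩ := Nat.exists_eq_add_of_le h
        have h1 : r + k + t - r - k = t := by omega
        have h2 : r + k + t - k = r + t := by omega
        rw [h1, h2]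
        subst hL
        nlinarith
    calc L ^ (k+1) * ((m - r - k) * (m - r).descFactorial k)
        = (L * (m - r - k)) * (L ^ k * (m - r).descFactorial k) := by ring
      _ ≤ (q * (m - k)) * (q ^ k * m.descFactorial k) := Nat.mul_le_mul h ih
      _ = _ := by ring

lemma aux_bern (q n : ℕ) : q ^ (n+1) + (n+1) * q ^ n ≤ (q+1) ^ (n+1) := by
  induction n with
  | zero => simp
  | succ n ih =>
    calc q ^ (n+1+1) + (n+1+1) * q ^ (n+1)
        ≤ (q ^ (n+1) + (n+1) * q ^ n) * (q+1) := by
          have : 0 ≤ (n+1) * q ^ n := Nat.zero_le _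
          ring_nf at this ⊢
          nlinarith
      _ ≤ (q+1) ^ (n+1) * (q+1) := Nat.mul_le_mul_right _ ih
      _ = _ := by ring

/-- With `ℓ = 2^a` and `r = 100·ℓ·a = 100·ℓ·log₂ℓ`: for every `m ≤ 4·r·ℓ` we have
`ℓ^7 · C(m − r, r) ≤ C(m, r)`, i.e. a uniformly random `r`-subset of an `m`-set is
disjoint from a fixed `r`-subset with probability at most `ℓ^{-7}`. -/
theorem statement9 (a : ℕ) (ha : 1 ≤ a) (m : ℕ)
    (hm : m ≤ 4 * (100 * 2 ^ a * a) * 2 ^ a) :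
    (2 ^ a) ^ 7 * Nat.choose (m - 100 * 2 ^ a * a) (100 * 2 ^ a * a) ≤
      Nat.choose m (100 * 2 ^ a * a) := by
  have hp : 0 < 2 ^ a := by positivity
  generalize hl : 2 ^ a = l at *
  obtain ⟨q, hq⟩ : ∃ q, 4 * l = q + 1 := ⟨4 * l - 1, by omega⟩
  generalize hr : 100 * l * a = r at *
  have hre : r = (q + 1) * (25 * a) := by rw [← hq, ← hr]; ring
  have h1 := aux_desc (q+1) q r m rfl (by rw [← hq]; linarith) r
  have h2 : 2 * q ^ (q+1) ≤ (q+1) ^ (q+1) := by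
    have := aux_bern q q
    have e : q ^ (q+1) = q * q ^ q := by ring
    have e2 : (q + 1) * q ^ q = q * q ^ q + q ^ q := by ring
    omega
  have h3 : l ^ 7 * q ^ r ≤ (q+1) ^ r := by
    calc l ^ 7 * q ^ r ≤ 2 ^ (25 * a) * q ^ r := by
          apply Nat.mul_le_mul_right
          rw [← hl, ← pow_mul]
          exact Nat.pow_le_pow_right (by norm_num) (by omega)
      _ = (2 * q ^ (q+1)) ^ (25 * a) := by rw [hre, mul_pow, pow_mul q]
      _ ≤ ((q+1) ^ (q+1)) ^ (25 * a) := Nat.pow_le_pow_left h2 _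
      _ = (q+1) ^ r := by rw [hre, pow_mul (q+1) (q+1)]
  have hqpos : 0 < q ^ r := by
    have : 0 < q := by omega
    positivity
  rw [Nat.descFactorial_eq_factorial_mul_choose, Nat.descFactorial_eq_factorial_mul_choose] at h1
  have hc : (q+1) ^ r * (m - r).choose r ≤ q ^ r * m.choose r := by
    apply Nat.le_of_mul_le_mul_left _ (Nat.factorial_pos r)
    linarith
  apply Nat.le_of_mul_le_mul_left _ hqpos
  calc q ^ r * (l ^ 7 * (m - r).choose r) = (l ^ 7 * q ^ r) * (m - r).choose r := by ring
    _ ≤ (q+1) ^ r * (m - r).choose r := Nat.mul_le_mul_right _ h3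
    _ ≤ _ := hc
end
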